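/- For all constants K ≥ 1 and c > 0 there exist constants C > 0 and δ > 0 with the following property. Let 𝐝 = (d_1,…,d_n) be a degree sequence with even sum M and maximum entry Δ satisfying Δ² ≤ δM; let H₁, H₂ be edge-disjoint graphs on [n] with 𝐝^{H₁} ⪯ 𝐝 and Δ_{H₂} ≤ KΔ; set 𝐝̃ = 𝐝 − 𝐝^{H₁}, M̃ = Σ_i d̃_i, M̃₂ = Σ_i d̃_i(d̃_i−1), and assume M̃ ≥ cM; let u ≠ v with uv ∉ H₁ ∪ H₂. Let G' be chosen uniformly at random from the (assumed nonempty) set 𝒢⁻ of graphs with degree sequence 𝐝 that contain H₁ and contain neither the edge uv nor any edge of H₂. Let Y₁ be the number of ordered pairs (x,y) such that xu and yv are edges of G' not in H₁ and xy is an edge of G' ∪ H₂, and let Y₂ be the number of vertices x such that both xu and xv are edges of G' not in H₁. Then |E Y₁ − (d̃_u d̃_v M̃₂²/M̃³ + Σ_{(x,y)∈𝒲} d̃_x d̃_y d̃_u d̃_v/M̃²)| ≤ C·d̃_u d̃_v·Δ⁵n/M³ and |E Y₂ − d̃_u d̃_v M̃₂/M̃²| ≤ C·d̃_u d̃_v·Δ³/M²,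 where 𝒲 is the set of ordered pairs (x,y) with xy ∈ H₁ ∪ H₂, xu ∉ H₁ ∪ H₂, yv ∉ H₁ ∪ H₂, and {x,y} ∩ {u,v} = ∅. -/

import Mathlib

open Filter

noncomputable section

/-- The degree of the vertex `v` in the simple graph `G`. -/
def deg {n : ℕ} (G : SimpleGraph (Fin n)) (v : Fin n) : ℕ := (G.neighborSet v).ncard

/-- The number of edges of `G`. -/
def nedges {n : ℕ} (G : SimpleGraph (Fin n)) : ℕ := G.edgeSet.ncard

/-- The maximum degree of `G`. -/
def maxDeg {n : ℕ} (G : SimpleGraph (Fin n)) : ℕ := Finset.univ.sup (deg G)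

/-- The expectation of `X` for a graph chosen uniformly at random among all simple graphs
on `[n]` satisfying `base`. -/
def expect {n : ℕ} (base : SimpleGraph (Fin n) → Prop) (X : SimpleGraph (Fin n) → ℝ) : ℝ :=
  (∑ᶠ G ∈ {G : SimpleGraph (Fin n) | base G}, X G) /
    (Nat.card {G : SimpleGraph (Fin n) // base G} : ℝ)

/-- `Y₁`: the number of ordered pairs `(x,y)` such that `xu` and `yv` are edges of `G'`
not in `H₁` and `xy` is an edge of `G' ∪ H₂`. -/
def Y1 {n : ℕ} (H₁ H₂ : SimpleGraph (Fin n)) (u v : Fin n) (G : SimpleGraph (Fin n)) : ℕ :=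
  Nat.card {p : Fin n × Fin n // G.Adj p.1 u ∧ ¬ H₁.Adj p.1 u ∧
    G.Adj p.2 v ∧ ¬ H₁.Adj p.2 v ∧ (G ⊔ H₂).Adj p.1 p.2}

/-- `Y₂`: the number of vertices `x` such that both `xu` and `xv` are edges of `G'`
not in `H₁`. -/
def Y2 {n : ℕ} (H₁ : SimpleGraph (Fin n)) (u v : Fin n) (G : SimpleGraph (Fin n)) : ℕ :=
  Nat.card {x : Fin n // G.Adj x u ∧ ¬ H₁.Adj x u ∧ G.Adj x v ∧ ¬ H₁.Adj x v}

/-!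
Condition on the prescribed edges `H` and the forbidden edges `F`. Deleting two edges `ab`, `xy`
of a graph and inserting `ax`, `by` is reversible and keeps all degrees, and all but a small
fraction of the candidate pairs `(x, y)` are legal. Double counting these switchings shows that a
pair `ab` outside `H ⊔ F` is an edge with probability close to `d̃_a d̃_b / M̃`, where the residual
degrees `d̃` are those left after `H`. Prescribing the edges of a configuration one at a time gives
the probability of a path of two edges (for `Y2`), or of the edges `xu`, `yv` and possibly `xy`
(for `Y1`); summing over `x`, respectively over `(x, y)`, yields the two expectations.
-/

section

open Finset SimpleGraph
open scoped Classical

variable {V : Type*}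

section Degree

theorem degree_sup_of_disjoint {G H : SimpleGraph V} (h : Disjoint G H) (v : V)
    [Fintype (G.neighborSet v)] [Fintype (H.neighborSet v)] [Fintype ((G ⊔ H).neighborSet v)] :
    (G ⊔ H).degree v = G.degree v + H.degree v := by
  simp only [← card_neighborFinset_eq_degree, neighborFinset_sup_of_disjoint v h,
    card_disjUnion]

theorem degree_sup_le (G H : SimpleGraph V) (v : V)
    [Fintype (G.neighborSet v)] [Fintype (H.neighborSet v)] [Fintype ((G ⊔ H).neighborSet v)] :
    (G ⊔ H).degree v ≤ G.degree v + H.degree v := by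
  simp only [← card_neighborFinset_eq_degree, neighborFinset_sup]
  exact card_union_le _ _

theorem degree_sdiff_of_le {G H : SimpleGraph V} (h : H ≤ G) (v : V)
    [Fintype (G.neighborSet v)] [Fintype (H.neighborSet v)] [Fintype ((G \ H).neighborSet v)] :
    (G \ H).degree v = G.degree v - H.degree v := by
  have hsub : H.neighborFinset v ⊆ G.neighborFinset v := fun w hw ↦
    (G.mem_neighborFinset v w).2 (h ((H.mem_neighborFinset v w).1 hw))
  simp only [← card_neighborFinset_eq_degree, neighborFinset_sdiff, card_sdiff_of_subset hsub]

theorem degree_edge {a b : V} (hab : a ≠ b) (v : V) [Fintype ((edge a b).neighborSet v)] :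
    (edge a b).degree v = (if v = a then 1 else 0) + (if v = b then 1 else 0) := by
  rw [← card_neighborFinset_eq_degree]
  by_cases hva : v = a
  · have : (edge a b).neighborFinset v = {b} := by ext; simp [edge_adj]; grind
    grind
  by_cases hvb : v = b
  · have : (edge a b).neighborFinset v = {a} := by ext; simp [edge_adj]; grind
    grind
  · have : (edge a b).neighborFinset v = ∅ := by ext; simp [edge_adj]; grind
    grind

theorem degree_edge_le (a b v : V) [Fintype ((edge a b).neighborSet v)] :
    (edge a b).degree v ≤ (if v = a then 1 else 0) + (if v = b then 1 else 0) := by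
  by_cases hab : a = b
  · simp [hab, edge_self_eq_bot]
  · exact (degree_edge hab v).le

end Degree

section Switching

/-- The switching that replaces the edges `ab` and `xy` of `G` by `ax` and `by`. -/
def switch (a b x y : V) (G : SimpleGraph V) : SimpleGraph V :=
  G \ (edge a b ⊔ edge x y) ⊔ (edge a x ⊔ edge b y)

/-- The switching of `ab` and `xy` into `ax` and `by` is legal in `G`: it removes two edges outside
the prescribed graph `H` and adds two new edges outside the forbidden graph `F`. -/
structure Switchable (H F G : SimpleGraph V) (a b x y : V) : Prop where
  left : (G \ H).Adj a b
  right : (G \ H).Adj x y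
  new_left : (G ⊔ F)ᶜ.Adj a x
  new_right : (G ⊔ F)ᶜ.Adj b y

variable {H F G : SimpleGraph V} {a b x y : V}

theorem Switchable.edges_le (h : Switchable H F G a b x y) : edge a b ⊔ edge x y ≤ G :=
  sup_le (G.edge_le_iff.2 (.inr h.left.1)) (G.edge_le_iff.2 (.inr h.right.1))

theorem Switchable.disjoint_new_edges (h : Switchable H F G a b x y) :
    Disjoint (G ⊔ F) (edge a x ⊔ edge b y) :=
  disjoint_sup_right.2 ⟨(disjoint_edge _).2 h.new_left.2, (disjoint_edge _).2 h.new_right.2⟩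

theorem Switchable.switch_switch (h : Switchable H F G a b x y) :
    switch a x b y (switch a b x y G) = G := by
  have hnew : Disjoint (G \ (edge a b ⊔ edge x y)) (edge a x ⊔ edge b y) :=
    h.disjoint_new_edges.mono_left (sdiff_le.trans le_sup_left)
  rw [switch, switch, sup_sdiff_right_self, hnew.sdiff_eq_left, sdiff_sup_cancel h.edges_le]

theorem Switchable.reverse (h : Switchable H F G a b x y) (hH : H ≤ G) (hF : Disjoint G F) :
    Switchable H F (switch a b x y G) a x b y := by
  have hHG (p q : V) (hpq : H.Adj p q) : G.Adj p q := hH hpq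
  have hGF := SimpleGraph.disjoint_left.1 hF
  obtain ⟨⟨hab, -⟩, ⟨hxy, -⟩, ⟨hax, hnax⟩, hby, hnby⟩ := h
  have := hab.ne
  have := hxy.ne
  simp only [ne_eq, sup_adj, not_or] at *
  constructor <;> simp only [switch, sdiff_adj, sup_adj, edge_adj, compl_adj] <;>
    grind [SimpleGraph.adj_comm]

theorem Switchable.disjoint_old_edges (h : Switchable H F G a b x y) :
    Disjoint (edge a b) (edge x y) := by
  have hax := h.new_left
  have hby := h.new_right
  have hab := h.left
  simp only [disjoint_edge, edge_adj, compl_adj, sup_adj, sdiff_adj] at *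
  grind [SimpleGraph.adj_comm]

/- Both `G` and the switched graph consist of `G \ (edge a b ⊔ edge x y)` and two further disjoint
edges on the vertices `a`, `b`, `x`, `y`. -/
theorem Switchable.degree_switch [Fintype V] (h : Switchable H F G a b x y)
    (h' : Switchable H F (switch a b x y G) a x b y) (v : V) :
    (switch a b x y G).degree v = G.degree v := by
  have hnew : Disjoint (G \ (edge a b ⊔ edge x y)) (edge a x ⊔ edge b y) :=
    h.disjoint_new_edges.mono_left (sdiff_le.trans le_sup_left)
  have hG : G \ (edge a b ⊔ edge x y) ⊔ (edge a b ⊔ edge x y) = G :=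
    sdiff_sup_cancel h.edges_le
  conv_rhs => rw [← hG]
  rw [switch, degree_sup_of_disjoint hnew, degree_sup_of_disjoint disjoint_sdiff_self_left,
    degree_sup_of_disjoint h.disjoint_old_edges, degree_sup_of_disjoint h'.disjoint_old_edges,
    degree_edge h.left.1.ne, degree_edge h.right.1.ne, degree_edge h.new_left.1,
    degree_edge h.new_right.1]
  ring

theorem compl_sup_edge_adj (hxy : (H ⊔ F)ᶜ.Adj x y) (hne : ¬ (edge a b).Adj x y) :
    (H ⊔ edge a b ⊔ F)ᶜ.Adj x y := by
  rw [sup_right_comm]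
  exact ⟨hxy.1, not_or.2 ⟨hxy.2, hne⟩⟩

end Switching

variable [Fintype V] {d : V → ℕ} {H F G : SimpleGraph V} {a b x y : V}

section GraphsWith

/-- The graphs with degree sequence `d` that contain `H` and avoid the edges of `F`. -/
def graphsWith (d : V → ℕ) (H F : SimpleGraph V) : Finset (SimpleGraph V) :=
  {G | (∀ v, G.degree v = d v) ∧ H ≤ G ∧ Disjoint G F}

theorem mem_graphsWith :
    G ∈ graphsWith d H F ↔ (∀ v, G.degree v = d v) ∧ H ≤ G ∧ Disjoint G F := by
  simp [graphsWith]

theorem mem_graphsWith_sup_edge :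
    G ∈ graphsWith d (H ⊔ edge a b) F ↔ G ∈ graphsWith d H F ∧ (a = b ∨ G.Adj a b) := by
  simp only [mem_graphsWith, sup_le_iff, edge_le_iff]
  tauto

theorem switch_mem_graphsWith (hG : G ∈ graphsWith d H F) (h : Switchable H F G a b x y) :
    switch a b x y G ∈ graphsWith d H F := by
  obtain ⟨hdeg, hH, hF⟩ := mem_graphsWith.1 hG
  have hnew : Disjoint (edge a x ⊔ edge b y) F :=
    (h.disjoint_new_edges.mono_left le_sup_right).symm
  have hold : H ≤ G \ (edge a b ⊔ edge x y) := by
    refine le_sdiff.2 ⟨hH, disjoint_sup_right.2 ⟨?_, ?_⟩⟩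
    · exact (disjoint_edge H).2 h.left.2
    · exact (disjoint_edge H).2 h.right.2
  refine mem_graphsWith.2 ⟨fun v ↦ ?_, hold.trans le_sup_left, ?_⟩
  · rw [h.degree_switch (h.reverse hH hF), hdeg]
  · exact disjoint_sup_left.2 ⟨hF.mono_left sdiff_le, hnew⟩

theorem card_switchable_comm (d : V → ℕ) (H F : SimpleGraph V) (a b x y : V) :
    #{G ∈ graphsWith d H F | Switchable H F G a b x y} =
      #{G ∈ graphsWith d H F | Switchable H F G a x b y} := by
  have maps_to {b x : V} : ∀ G ∈ ({G ∈ graphsWith d H F | Switchable H F G a b x y} : Finset _),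
      switch a b x y G ∈ ({G ∈ graphsWith d H F | Switchable H F G a x b y} : Finset _) := by
    intro G hG
    obtain ⟨hG, h⟩ := mem_filter.1 hG
    obtain ⟨-, hH, hF⟩ := mem_graphsWith.1 hG
    exact mem_filter.2 ⟨switch_mem_graphsWith hG h, h.reverse hH hF⟩
  exact card_nbij' (switch a b x y) (switch a x b y) maps_to maps_to
    (fun G hG ↦ (mem_filter.1 hG).2.switch_switch) (fun G hG ↦ (mem_filter.1 hG).2.switch_switch)

/- Double counting of the legal switchings that remove `ab`, respectively create `ab`. -/
theorem sum_card_switchable_comm (d : V → ℕ) (H F : SimpleGraph V) (a b : V) :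
    ∑ G ∈ graphsWith d H F, #{p : V × V | Switchable H F G a b p.1 p.2} =
      ∑ G ∈ graphsWith d H F, #{p : V × V | Switchable H F G a p.1 b p.2} := by
  have := fun r : SimpleGraph V → V × V → Prop ↦
    sum_card_bipartiteAbove_eq_sum_card_bipartiteBelow (s := graphsWith d H F) (t := univ) r
  simp only [bipartiteAbove, bipartiteBelow] at this
  simp only [this, card_switchable_comm]

/-- The number of edges at `v` left to be placed once those of `H` are prescribed. The subtraction
is truncated, so `resDeg d H v = 0` when `H` is too large to extend to degree `d v`. -/
def resDeg (d : V → ℕ) (H : SimpleGraph V) (v : V) : ℕ := d v - H.degree v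

theorem resDeg_eq (d : V → ℕ) (H : SimpleGraph V) (v : V) [Fintype (H.neighborSet v)] :
    resDeg d H v = d v - H.degree v := by
  rw [resDeg]
  congr!

theorem resDeg_le (d : V → ℕ) (H : SimpleGraph V) (v : V) : resDeg d H v ≤ d v :=
  Nat.sub_le _ _

theorem resDeg_sup_edge (d : V → ℕ) (hab : a ≠ b) (hH : ¬ H.Adj a b) (v : V) :
    resDeg d (H ⊔ edge a b) v =
      resDeg d H v - ((if v = a then 1 else 0) + (if v = b then 1 else 0)) := by
  rw [resDeg_eq d (H ⊔ edge a b), resDeg, degree_sup_of_disjoint ((disjoint_edge H).2 hH),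
    degree_edge hab, Nat.sub_add_eq]

theorem resDeg_anti {H H' : SimpleGraph V} (h : H ≤ H') (d : V → ℕ) (v : V) :
    resDeg d H' v ≤ resDeg d H v :=
  Nat.sub_le_sub_left (degree_le_of_le h) _

theorem sum_resDeg_le_sum_resDeg_sup_edge (d : V → ℕ) (H : SimpleGraph V) (a b : V) :
    ∑ v, resDeg d H v ≤ ∑ v, resDeg d (H ⊔ edge a b) v + 2 := by
  have hle (v : V) : resDeg d H v ≤ resDeg d (H ⊔ edge a b) v +
      ((if v = a then 1 else 0) + (if v = b then 1 else 0)) := by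
    have := degree_sup_le H (edge a b) v
    have := degree_edge_le a b v
    rw [resDeg_eq, resDeg_eq]
    omega
  calc ∑ v, resDeg d H v
      ≤ ∑ v, (resDeg d (H ⊔ edge a b) v + ((if v = a then 1 else 0) + (if v = b then 1 else 0))) :=
        sum_le_sum fun v _ ↦ hle v
    _ = _ := by simp [sum_add_distrib]

theorem degree_sdiff_of_mem_graphsWith (hG : G ∈ graphsWith d H F) (v : V)
    [Fintype ((G \ H).neighborSet v)] : (G \ H).degree v = resDeg d H v := by
  obtain ⟨hdeg, hH, -⟩ := mem_graphsWith.1 hG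
  rw [degree_sdiff_of_le hH, hdeg, resDeg]

theorem sdiff_le_compl_of_mem_graphsWith (hG : G ∈ graphsWith d H F) : G \ H ≤ (H ⊔ F)ᶜ := by
  rw [le_compl_iff_disjoint_right, disjoint_sup_right]
  exact ⟨disjoint_sdiff_self_left, (mem_graphsWith.1 hG).2.2.mono_left sdiff_le⟩

end GraphsWith

section Counting

theorem card_filter_prod {α β : Type*} [Fintype α] [Fintype β] (r : α → β → Prop)
    [∀ x, DecidablePred (r x)] : #{p : α × β | r p.1 p.2} = ∑ x, #{y | r x y} := by
  simp only [card_filter, Fintype.sum_prod_type]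

theorem card_filter_prod_swap {α β : Type*} [Fintype α] [Fintype β] (r : α → β → Prop)
    [∀ x, DecidablePred (r x)] : #{p : α × β | r p.1 p.2} = #{p : β × α | r p.2 p.1} :=
  card_bijective Prod.swap Prod.swap_bijective (by simp)

theorem card_filter_adj (G : SimpleGraph V) [DecidableRel G.Adj] :
    #{p : V × V | G.Adj p.1 p.2} = ∑ v, G.degree v := by
  simp only [card_filter_prod G.Adj, ← card_neighborFinset_eq_degree, neighborFinset_eq_filter]

theorem card_filter_and_adj_le [DecidableRel G.Adj] (P : V → Prop) [DecidablePred P] {L D : ℝ}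
    (hP : (#{v | P v} : ℝ) ≤ L) (hD : 0 ≤ D) (hG : ∀ v, (G.degree v : ℝ) ≤ D) :
    (#{p : V × V | P p.1 ∧ G.Adj p.1 p.2} : ℝ) ≤ L * D := by
  have hsum : #{p : V × V | P p.1 ∧ G.Adj p.1 p.2} = ∑ v with P v, G.degree v := by
    rw [card_filter_prod (fun x y ↦ P x ∧ G.Adj x y), sum_filter]
    refine sum_congr rfl fun v _ ↦ ?_
    split_ifs with hv <;> simp [hv, ← card_neighborFinset_eq_degree, neighborFinset_eq_filter]
  calc (#{p : V × V | P p.1 ∧ G.Adj p.1 p.2} : ℝ)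
      = ∑ v with P v, (G.degree v : ℝ) := by exact_mod_cast hsum
    _ ≤ #{v | P v} * D := by
      simpa only [nsmul_eq_mul] using sum_le_card_nsmul _ _ D fun v _ ↦ hG v
    _ ≤ L * D := by gcongr

theorem card_not_compl_adj_le (G : SimpleGraph V) (v : V) [Fintype (G.neighborSet v)]
    [DecidablePred (Gᶜ.Adj v)] : #{w | ¬ Gᶜ.Adj v w} ≤ G.degree v + 1 := by
  have hsub : ({w | ¬ Gᶜ.Adj v w} : Finset V) ⊆ insert v (G.neighborFinset v) := by
    intro w hw
    simp only [mem_filter_univ, compl_adj, not_and_or, not_not] at hw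
    simpa [eq_comm] using hw
  exact (card_le_card hsub).trans (card_insert_le _ _)

end Counting

section Bounds

/-- The hypotheses under which the switching estimates are made: `D` bounds the degrees `d`, `L`
bounds the number of vertices that equal, or are joined in `G ⊔ F` to, a given vertex, and the sum
of the residual degrees is `m` up to an error of `2 * k`, the loss caused by adding `k` edges
to `H`. -/
structure SwitchBounds (d : V → ℕ) (H F : SimpleGraph V) (D L m : ℝ) (k : ℕ) : Prop where
  one_le : 1 ≤ D
  le : ∀ v, (d v : ℝ) ≤ D
  degree_le : ∀ v, D + F.degree v + 1 ≤ L
  large : 20 * (L * D) ≤ m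
  sub_le_sum : m - 2 * k ≤ ∑ v, (resDeg d H v : ℝ)
  sum_le : ∑ v, (resDeg d H v : ℝ) ≤ m

variable {D L m : ℝ} {k : ℕ}

theorem SwitchBounds.sup_edge (h : SwitchBounds d H F D L m k) (a b : V) :
    SwitchBounds d (H ⊔ edge a b) F D L m (k + 1) where
  __ := h
  sub_le_sum := by
    have hsum : (∑ v, resDeg d H v : ℝ) ≤ ∑ v, (resDeg d (H ⊔ edge a b) v : ℝ) + 2 := by
      exact_mod_cast sum_resDeg_le_sum_resDeg_sup_edge d H a b
    have := h.sub_le_sum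
    push_cast
    linarith
  sum_le := by
    have hle (v : V) : (resDeg d (H ⊔ edge a b) v : ℝ) ≤ resDeg d H v := by
      exact_mod_cast resDeg_anti le_sup_left d v
    exact (sum_le_sum fun v _ ↦ hle v).trans h.sum_le

theorem SwitchBounds.resDeg_le (h : SwitchBounds d H F D L m k) (v : V) :
    (resDeg d H v : ℝ) ≤ D :=
  (Nat.cast_le.2 (_root_.resDeg_le d H v)).trans (h.le v)

theorem SwitchBounds.degree_bound_le (h : SwitchBounds d H F D L m k) (v : V) : D ≤ L := by
  have := h.degree_le v
  have : (0 : ℝ) ≤ F.degree v := Nat.cast_nonneg _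
  linarith

theorem SwitchBounds.card_not_compl_adj_le (h : SwitchBounds d H F D L m k)
    (hG : G ∈ graphsWith d H F) (v : V) : (#{w | ¬ (G ⊔ F)ᶜ.Adj v w} : ℝ) ≤ L := by
  have hcard : #{w | ¬ (G ⊔ F)ᶜ.Adj v w} ≤ d v + F.degree v + 1 := by
    rw [← (mem_graphsWith.1 hG).1 v]
    exact (_root_.card_not_compl_adj_le _ v).trans (Nat.succ_le_succ (degree_sup_le G F v))
  calc (#{w | ¬ (G ⊔ F)ᶜ.Adj v w} : ℝ) ≤ d v + F.degree v + 1 := by exact_mod_cast hcard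
    _ ≤ D + F.degree v + 1 := by grw [h.le v]
    _ ≤ L := h.degree_le v

theorem card_switchable_le_sum_resDeg (hG : G ∈ graphsWith d H F) (a b : V) :
    #{p : V × V | Switchable H F G a b p.1 p.2} ≤ ∑ v, resDeg d H v := by
  calc #{p : V × V | Switchable H F G a b p.1 p.2}
      ≤ #{p : V × V | (G \ H).Adj p.1 p.2} :=
        card_le_card (monotone_filter_right _ fun p _ h ↦ h.right)
    _ = ∑ v, resDeg d H v := by
      simp only [card_filter_adj, degree_sdiff_of_mem_graphsWith hG]

theorem SwitchBounds.sum_resDeg_sub_le_card_switchable (h : SwitchBounds d H F D L m k)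
    (hG : G ∈ graphsWith d H F) (hab : (G \ H).Adj a b) :
    ∑ v, (resDeg d H v : ℝ) - 2 * (L * D) ≤ #{p : V × V | Switchable H F G a b p.1 p.2} := by
  have hdeg (v : V) : ((G \ H).degree v : ℝ) ≤ D := by
    rw [degree_sdiff_of_mem_graphsWith hG]
    exact h.resDeg_le v
  have hfst := card_filter_and_adj_le (fun v ↦ ¬ (G ⊔ F)ᶜ.Adj a v)
    (h.card_not_compl_adj_le hG a) (by linarith [h.one_le]) hdeg
  have hsnd := card_filter_and_adj_le (fun v ↦ ¬ (G ⊔ F)ᶜ.Adj b v)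
    (h.card_not_compl_adj_le hG b) (by linarith [h.one_le]) hdeg
  rw [card_filter_prod_swap (fun x y ↦ ¬ (G ⊔ F)ᶜ.Adj b x ∧ (G \ H).Adj x y)] at hsnd
  have hcover : ({p | (G \ H).Adj p.1 p.2} : Finset (V × V)) ⊆
      ({p | Switchable H F G a b p.1 p.2} : Finset (V × V)) ∪
        ({p | ¬ (G ⊔ F)ᶜ.Adj a p.1 ∧ (G \ H).Adj p.1 p.2} : Finset (V × V)) ∪
        ({p | ¬ (G ⊔ F)ᶜ.Adj b p.2 ∧ (G \ H).Adj p.2 p.1} : Finset (V × V)) := by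
    intro p hp
    simp only [mem_filter_univ, mem_union] at hp ⊢
    by_cases ha : (G ⊔ F)ᶜ.Adj a p.1
    · by_cases hb : (G ⊔ F)ᶜ.Adj b p.2
      · exact .inl (.inl ⟨hab, hp, ha, hb⟩)
      · exact .inr ⟨hb, hp.symm⟩
    · exact .inl (.inr ⟨ha, hp⟩)
  have hcard := ((card_le_card hcover).trans (card_union_le _ _)).trans
    (Nat.add_le_add_right (card_union_le _ _) _)
  rw [card_filter_adj, sum_congr rfl fun v _ ↦ degree_sdiff_of_mem_graphsWith hG v] at hcard
  have := (Nat.cast_le (α := ℝ)).2 hcard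
  push_cast at this
  linarith

theorem card_common_pairs (hG : G ∈ graphsWith d H F) (a b : V) :
    #{p : V × V | (G \ H).Adj a p.1 ∧ (G \ H).Adj b p.2} = resDeg d H a * resDeg d H b := by
  rw [← degree_sdiff_of_mem_graphsWith hG, ← degree_sdiff_of_mem_graphsWith hG,
    ← card_neighborFinset_eq_degree, ← card_neighborFinset_eq_degree, ← card_product]
  congr 1
  ext p
  simp

theorem card_switchable_add_card_blocked (hG : G ∈ graphsWith d H F) (hab : (G ⊔ F)ᶜ.Adj a b) :
    #{p : V × V | Switchable H F G a p.1 b p.2} +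
      #{p : V × V | ((G \ H).Adj a p.1 ∧ (G \ H).Adj b p.2) ∧ ¬ (G ⊔ F)ᶜ.Adj p.1 p.2} =
        resDeg d H a * resDeg d H b := by
  have hsplit := card_filter_add_card_filter_not
    (s := ({p | (G \ H).Adj a p.1 ∧ (G \ H).Adj b p.2} : Finset (V × V)))
    (fun p ↦ (G ⊔ F)ᶜ.Adj p.1 p.2)
  rw [filter_filter, filter_filter, card_common_pairs hG] at hsplit
  rw [← hsplit]
  congr 2
  ext p
  simp only [mem_filter_univ]
  exact ⟨fun h ↦ ⟨⟨h.left, h.right⟩, h.new_right⟩, fun h ↦ ⟨h.1.1, h.1.2, hab, h.2⟩⟩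

theorem card_switchable_le_mul (hG : G ∈ graphsWith d H F) (a b : V) :
    #{p : V × V | Switchable H F G a p.1 b p.2} ≤ resDeg d H a * resDeg d H b := by
  rw [← card_common_pairs hG]
  exact card_le_card (monotone_filter_right _ fun p _ h ↦ ⟨h.left, h.right⟩)

theorem sum_card_switchable_le (d : V → ℕ) (H F : SimpleGraph V) (a b : V) :
    ∑ G ∈ graphsWith d H F, #{p : V × V | Switchable H F G a b p.1 p.2} ≤
      #{G ∈ graphsWith d H F | (G \ H).Adj a b} * ∑ v, resDeg d H v := by
  rw [← smul_eq_mul, ← sum_const, sum_filter]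
  refine sum_le_sum fun G hG ↦ ?_
  split_ifs with hab
  · exact card_switchable_le_sum_resDeg hG a b
  · exact (card_eq_zero.2 (filter_eq_empty_iff.2 fun p _ h ↦ hab h.left)).le

theorem SwitchBounds.card_adj_mul_le_sum_card_switchable (h : SwitchBounds d H F D L m k)
    (a b : V) : #{G ∈ graphsWith d H F | (G \ H).Adj a b} * (m - 2 * k - 2 * (L * D)) ≤
      (∑ G ∈ graphsWith d H F, #{p : V × V | Switchable H F G a b p.1 p.2} : ℝ) := by
  rw [← nsmul_eq_mul, ← sum_const, sum_filter]
  refine sum_le_sum fun G hG ↦ ?_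
  split_ifs with hab
  · linarith [h.sum_resDeg_sub_le_card_switchable hG hab, h.sub_le_sum]
  · exact Nat.cast_nonneg _

theorem SwitchBounds.le_mul (h : SwitchBounds d H F D L m k) (v : V) : D ^ 2 ≤ L * D := by
  rw [sq]
  exact mul_le_mul_of_nonneg_right (h.degree_bound_le v) (zero_le_one.trans h.one_le)

theorem SwitchBounds.one_le_mul (h : SwitchBounds d H F D L m k) (v : V) : 1 ≤ L * D :=
  (one_le_pow₀ h.one_le).trans (h.le_mul v)

theorem SwitchBounds.card_adj_mul_le (h : SwitchBounds d H F D L m k) (hk : k ≤ 4) (a b : V) :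
    #{G ∈ graphsWith d H F | (G \ H).Adj a b} * m ≤
      2 * (resDeg d H a * resDeg d H b * #(graphsWith d H F) : ℝ) := by
  have hcount : #{G ∈ graphsWith d H F | (G \ H).Adj a b} * (m - 2 * k - 2 * (L * D)) ≤
      (resDeg d H a * resDeg d H b * #(graphsWith d H F) : ℝ) := by
    refine (h.card_adj_mul_le_sum_card_switchable a b).trans ?_
    have hle := sum_le_card_nsmul (graphsWith d H F) _ _ fun G hG ↦
      card_switchable_le_mul (a := a) (b := b) hG
    rw [← sum_card_switchable_comm, smul_eq_mul, mul_comm] at hle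
    exact_mod_cast hle
  have hk' : (k : ℝ) ≤ 4 := by exact_mod_cast hk
  have hhalf : m ≤ 2 * (m - 2 * k - 2 * (L * D)) := by linarith [h.large, h.one_le_mul a]
  calc #{G ∈ graphsWith d H F | (G \ H).Adj a b} * m
      ≤ #{G ∈ graphsWith d H F | (G \ H).Adj a b} * (2 * (m - 2 * k - 2 * (L * D))) := by gcongr
    _ ≤ 2 * (resDeg d H a * resDeg d H b * #(graphsWith d H F) : ℝ) := by linarith

/- The vertex `z` is chosen so that prescribing the edge `xz` expresses that `xy` is blocked:
`z = x` when `xy` is blocked by `F`, and `z = y` otherwise. -/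
theorem SwitchBounds.exists_graphsWith_eq_filter_blocked (h : SwitchBounds d H F D L m k)
    (hax : a ≠ x) (hHax : ¬ H.Adj a x) (hab : a ≠ b) (hxb : x ≠ b) (hya : y ≠ a) :
    ∃ H', H ≤ H' ∧ SwitchBounds d H' F D L m (k + 2) ∧ (H'.Adj b y → H.Adj b y) ∧
      graphsWith d H' F =
        {G ∈ graphsWith d H F | (G \ H).Adj a x ∧ ¬ (G ⊔ F)ᶜ.Adj x y} := by
  obtain ⟨z, hzy, hz⟩ : ∃ z, (z = x ∨ z = y) ∧
      ∀ G : SimpleGraph V, ¬ (G ⊔ F)ᶜ.Adj x y ↔ x = z ∨ G.Adj x z := by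
    by_cases hF : F.Adj x y
    · exact ⟨x, .inl rfl, by simp [hF]⟩
    · exact ⟨y, .inr rfl, fun G ↦ by simp only [compl_adj, sup_adj, hF, or_false]; tauto⟩
  refine ⟨H ⊔ edge a x ⊔ edge x z, le_sup_left.trans le_sup_left, (h.sup_edge a x).sup_edge x z,
    ?_, ?_⟩
  · simp only [sup_adj, edge_adj]
    grind
  · ext G
    simp only [mem_graphsWith_sup_edge, mem_filter, hz, sdiff_adj, hax, hHax, false_or,
      not_false_eq_true, and_true, and_assoc]

theorem SwitchBounds.card_blocked_mul_le (h : SwitchBounds d H F D L m k) (hk : k ≤ 2)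
    (hab : a ≠ b) (hxb : x ≠ b) (hya : y ≠ a) :
    #{G ∈ graphsWith d H F |
        ((G \ H).Adj a x ∧ (G \ H).Adj b y) ∧ ¬ (G ⊔ F)ᶜ.Adj x y} * m ≤
      2 * D * resDeg d H b *
        #{G ∈ graphsWith d H F | (G \ H).Adj a x ∧ ¬ (G ⊔ F)ᶜ.Adj x y} := by
  have hD : 0 ≤ D := zero_le_one.trans h.one_le
  by_cases hax : a = x ∨ H.Adj a x
  · have hempty : ({G ∈ graphsWith d H F |
        ((G \ H).Adj a x ∧ (G \ H).Adj b y) ∧ ¬ (G ⊔ F)ᶜ.Adj x y} : Finset _) = ∅ :=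
      filter_eq_empty_iff.2 fun G _ hG ↦ hax.elim hG.1.1.ne hG.1.1.2
    rw [hempty, card_empty, Nat.cast_zero, zero_mul]
    positivity
  push Not at hax
  obtain ⟨H', hHH', h', hby, hfilter⟩ :=
    h.exists_graphsWith_eq_filter_blocked hax.1 hax.2 hab hxb hya
  have hblocked : #{G ∈ graphsWith d H F |
      ((G \ H).Adj a x ∧ (G \ H).Adj b y) ∧ ¬ (G ⊔ F)ᶜ.Adj x y} ≤
        #{G ∈ graphsWith d H' F | (G \ H').Adj b y} := by
    refine card_le_card fun G hG ↦ ?_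
    simp only [hfilter, mem_filter] at hG ⊢
    exact ⟨⟨hG.1, hG.2.1.1, hG.2.2⟩, hG.2.1.2.1, fun h ↦ hG.2.1.2.2 (hby h)⟩
  have hm : 0 ≤ m := by linarith [h.large, h.one_le_mul a]
  calc _ ≤ #{G ∈ graphsWith d H' F | (G \ H').Adj b y} * m := by gcongr
    _ ≤ 2 * (resDeg d H' b * resDeg d H' y * #(graphsWith d H' F)) :=
      h'.card_adj_mul_le (by omega) b y
    _ ≤ 2 * (resDeg d H b * D * #(graphsWith d H' F)) := by
      gcongr
      · exact resDeg_anti hHH' d b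
      · exact h'.resDeg_le y
    _ = _ := by rw [hfilter]; ring

theorem SwitchBounds.card_adj_and_not_compl_adj_le (h : SwitchBounds d H F D L m k)
    (hG : G ∈ graphsWith d H F) (a : V) :
    (#{p : V × V | (G \ H).Adj a p.1 ∧ ¬ (G ⊔ F)ᶜ.Adj p.1 p.2} : ℝ) ≤ resDeg d H a * L := by
  rw [card_filter_prod (fun x y ↦ (G \ H).Adj a x ∧ ¬ (G ⊔ F)ᶜ.Adj x y), Nat.cast_sum,
    ← degree_sdiff_of_mem_graphsWith hG, ← card_neighborFinset_eq_degree, ← nsmul_eq_mul,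
    ← sum_const, neighborFinset_eq_filter, sum_filter]
  refine sum_le_sum fun x _ ↦ ?_
  split_ifs with hax
  · simpa only [hax, true_and] using h.card_not_compl_adj_le hG x
  · simp only [hax, false_and, filter_false, card_empty, Nat.cast_zero, le_refl]

theorem SwitchBounds.sum_card_blocked_mul_le (h : SwitchBounds d H F D L m k) (hk : k ≤ 2)
    (hab : a ≠ b) :
    (∑ G ∈ graphsWith d H F with ¬ G.Adj a b, #{p : V × V |
        ((G \ H).Adj a p.1 ∧ (G \ H).Adj b p.2) ∧ ¬ (G ⊔ F)ᶜ.Adj p.1 p.2} : ℝ) * m ≤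
      2 * (L * D) * (resDeg d H a * resDeg d H b * #(graphsWith d H F)) := by
  set A := graphsWith d H F
  have hm : 0 ≤ m := by linarith [h.large, h.one_le_mul a]
  have hD : 0 ≤ D := zero_le_one.trans h.one_le
  set Blocked := fun (G : SimpleGraph V) (p : V × V) ↦
    ((G \ H).Adj a p.1 ∧ (G \ H).Adj b p.2) ∧ ¬ (G ⊔ F)ᶜ.Adj p.1 p.2
  set Candidate := fun (G : SimpleGraph V) (p : V × V) ↦
    (G \ H).Adj a p.1 ∧ ¬ (G ⊔ F)ᶜ.Adj p.1 p.2
  set S : Finset (V × V) := {p | p.1 ≠ b ∧ p.2 ≠ a}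
  have hswap : ∑ G ∈ A with ¬ G.Adj a b, #{p | Blocked G p} ≤ ∑ p ∈ S, #{G ∈ A | Blocked G p} := by
    refine le_trans ?_ (sum_card_bipartiteAbove_eq_sum_card_bipartiteBelow Blocked).le
    refine (sum_le_sum fun G hG ↦ card_le_card fun p hp ↦ ?_).trans
      (sum_le_sum_of_subset (filter_subset _ _))
    obtain ⟨-, hGab⟩ := mem_filter.1 hG
    obtain ⟨-, ⟨hax, hby⟩, hxy⟩ := mem_filter.1 hp
    refine mem_filter.2 ⟨mem_filter.2 ⟨mem_univ p, ?_, ?_⟩, ⟨hax, hby⟩, hxy⟩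
    · rintro rfl
      exact hGab hax.1
    · rintro hpa
      exact hGab (hpa ▸ hby.1.symm)
  calc (∑ G ∈ A with ¬ G.Adj a b, #{p | Blocked G p} : ℝ) * m
      ≤ (∑ p ∈ S, #{G ∈ A | Blocked G p} : ℝ) * m := by
        gcongr
        exact_mod_cast hswap
    _ ≤ ∑ p ∈ S, 2 * D * resDeg d H b * #{G ∈ A | Candidate G p} := by
        rw [sum_mul]
        refine sum_le_sum fun p hp ↦ ?_
        obtain ⟨-, hpb, hpa⟩ := mem_filter.1 hp
        exact h.card_blocked_mul_le hk hab hpb hpa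
    _ ≤ ∑ p, 2 * D * resDeg d H b * #{G ∈ A | Candidate G p} :=
        sum_le_sum_of_subset_of_nonneg (subset_univ S) fun p _ _ ↦ by positivity
    _ = 2 * D * resDeg d H b * ∑ G ∈ A, (#{p | Candidate G p} : ℝ) := by
        rw [← mul_sum]
        exact_mod_cast congrArg (fun n : ℕ ↦ 2 * D * resDeg d H b * n)
          (sum_card_bipartiteAbove_eq_sum_card_bipartiteBelow (s := A) (t := univ) Candidate).symm
    _ ≤ 2 * D * resDeg d H b * ∑ _G ∈ A, resDeg d H a * L := by
        gcongr with _ hG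
        exact h.card_adj_and_not_compl_adj_le hG a
    _ = 2 * (L * D) * (resDeg d H a * resDeg d H b * #A) := by
        rw [sum_const, nsmul_eq_mul]
        ring

theorem sum_card_switchable_add_sum_card_blocked (d : V → ℕ) (hab : (H ⊔ F)ᶜ.Adj a b) :
    ∑ G ∈ graphsWith d H F, #{p : V × V | Switchable H F G a p.1 b p.2} +
      ∑ G ∈ graphsWith d H F with ¬ G.Adj a b, #{p : V × V |
        ((G \ H).Adj a p.1 ∧ (G \ H).Adj b p.2) ∧ ¬ (G ⊔ F)ᶜ.Adj p.1 p.2} =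
      #{G ∈ graphsWith d H F | ¬ G.Adj a b} * (resDeg d H a * resDeg d H b) := by
  rw [← smul_eq_mul, ← sum_const, sum_filter, sum_filter, ← sum_add_distrib]
  refine sum_congr rfl fun G hG ↦ ?_
  split_ifs with hGab
  · rw [add_zero, card_eq_zero, filter_eq_empty_iff]
    exact fun p _ h ↦ h.new_left.2 (.inl hGab)
  · have hF : ¬ F.Adj a b := fun hF ↦ hab.2 (.inr hF)
    exact card_switchable_add_card_blocked hG ⟨hab.1, not_or.2 ⟨hGab, hF⟩⟩

theorem filter_sdiff_adj_graphsWith (d : V → ℕ) (F : SimpleGraph V) (hab : a ≠ b)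
    (hH : ¬ H.Adj a b) :
    ({G ∈ graphsWith d H F | (G \ H).Adj a b} : Finset _) = graphsWith d (H ⊔ edge a b) F := by
  ext G
  simp only [mem_filter, mem_graphsWith_sup_edge, sdiff_adj, hab, hH, false_or, not_false_eq_true,
    and_true]

theorem card_graphsWith_sup_edge_add_card_not_adj (d : V → ℕ) (H F : SimpleGraph V)
    (hab : a ≠ b) :
    #(graphsWith d (H ⊔ edge a b) F) + #{G ∈ graphsWith d H F | ¬ G.Adj a b} =
      #(graphsWith d H F) := by
  rw [← card_filter_add_card_filter_not (s := graphsWith d H F) (fun G ↦ G.Adj a b)]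
  congr 2
  ext G
  simp only [mem_filter, mem_graphsWith_sup_edge, hab, false_or]

theorem sum_card_switchable_add_sum_card_blocked_eq_sub_mul (d : V → ℕ)
    (hab : (H ⊔ F)ᶜ.Adj a b) :
    (∑ G ∈ graphsWith d H F, #{p : V × V | Switchable H F G a b p.1 p.2} : ℝ) +
      (∑ G ∈ graphsWith d H F with ¬ G.Adj a b, #{p : V × V |
        ((G \ H).Adj a p.1 ∧ (G \ H).Adj b p.2) ∧ ¬ (G ⊔ F)ᶜ.Adj p.1 p.2} : ℝ) =
      (#(graphsWith d H F) - #(graphsWith d (H ⊔ edge a b) F)) *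
        (resDeg d H a * resDeg d H b) := by
  rw [← card_graphsWith_sup_edge_add_card_not_adj d H F hab.1, Nat.cast_add, add_sub_cancel_left]
  exact_mod_cast sum_card_switchable_comm d H F a b ▸
    sum_card_switchable_add_sum_card_blocked d hab

theorem SwitchBounds.pos (h : SwitchBounds d H F D L m k) (v : V) : 0 < m := by
  linarith [h.large, h.one_le_mul v]

theorem SwitchBounds.resDeg_mul_resDeg_le (h : SwitchBounds d H F D L m k) (a b : V) :
    (resDeg d H a * resDeg d H b : ℝ) ≤ L * D := by
  refine le_trans ?_ (h.le_mul a)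
  rw [sq]
  exact mul_le_mul (h.resDeg_le a) (h.resDeg_le b) (Nat.cast_nonneg _)
    (zero_le_one.trans h.one_le)

theorem SwitchBounds.abs_card_mul_sub_mul_le (h : SwitchBounds d H F D L m k) (hk : k ≤ 2)
    (hab : (H ⊔ F)ᶜ.Adj a b) :
    |#(graphsWith d (H ⊔ edge a b) F) * m -
        resDeg d H a * resDeg d H b * #(graphsWith d H F)| * m ≤
      12 * (L * D) * (resDeg d H a * resDeg d H b * #(graphsWith d H F)) := by
  have hH : ¬ H.Adj a b := fun hH ↦ hab.2 (.inl hH)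
  have hbalance := sum_card_switchable_add_sum_card_blocked_eq_sub_mul d hab
  have hS_le : (∑ G ∈ graphsWith d H F, #{p : V × V | Switchable H F G a b p.1 p.2} : ℝ) ≤
      #{G ∈ graphsWith d H F | (G \ H).Adj a b} * (∑ v, resDeg d H v : ℝ) := by
    exact_mod_cast sum_card_switchable_le d H F a b
  have hle_S := h.card_adj_mul_le_sum_card_switchable a b
  have hPm := h.card_adj_mul_le (hk.trans (by norm_num)) a b
  rw [filter_sdiff_adj_graphsWith d F hab.1 hH] at hS_le hle_S hPm
  have hBm := h.sum_card_blocked_mul_le hk hab.1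
  have hT := h.resDeg_mul_resDeg_le a b
  set T : ℝ := resDeg d H a * resDeg d H b
  set N : ℝ := (#(graphsWith d H F) : ℝ)
  set P : ℝ := (#(graphsWith d (H ⊔ edge a b) F) : ℝ)
  set S : ℝ := ∑ G ∈ graphsWith d H F, #{p : V × V | Switchable H F G a b p.1 p.2}
  set B : ℝ := ∑ G ∈ graphsWith d H F with ¬ G.Adj a b, #{p : V × V |
    ((G \ H).Adj a p.1 ∧ (G \ H).Adj b p.2) ∧ ¬ (G ⊔ F)ᶜ.Adj p.1 p.2}
  have hm := h.pos a
  have hP : 0 ≤ P := Nat.cast_nonneg _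
  have hupper : P * m - T * N ≤ L * D * (6 * P) := by
    have hB : 0 ≤ B := sum_nonneg fun _ _ ↦ Nat.cast_nonneg _
    have hPT : 0 ≤ P * T := mul_nonneg hP (by positivity)
    have hPk : P * (2 * k) ≤ P * (4 * (L * D)) := by
      have : (k : ℝ) ≤ 2 := by exact_mod_cast hk
      exact mul_le_mul_of_nonneg_left (by linarith [h.one_le_mul a]) hP
    linarith
  have hlower : T * N - P * m ≤ B + L * D * P := by
    have hPm' : P * (∑ v, resDeg d H v : ℝ) ≤ P * m := by grw [h.sum_le]
    have hPT : P * T ≤ P * (L * D) := by gcongr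
    linarith
  have hTN : 0 ≤ L * D * (T * N) :=
    mul_nonneg (zero_le_one.trans (h.one_le_mul a)) (by positivity)
  have hLDP : L * D * (P * m) ≤ L * D * (2 * (T * N)) :=
    mul_le_mul_of_nonneg_left hPm (zero_le_one.trans (h.one_le_mul a))
  rw [← abs_of_pos hm, ← abs_mul, abs_of_pos hm, abs_le]
  constructor
  · linarith [mul_le_mul_of_nonneg_right hlower hm.le]
  · linarith [mul_le_mul_of_nonneg_right hupper hm.le]

/-- The approximate probability that a random graph with degree sequence `d` containing `H` has the
edge `ab`, where `m` is the sum of the residual degrees. -/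
def edgeProb (d : V → ℕ) (H : SimpleGraph V) (m : ℝ) (a b : V) : ℝ :=
  resDeg d H a * resDeg d H b / m

theorem SwitchBounds.abs_card_sup_edge_sub_le (h : SwitchBounds d H F D L m k) (hk : k ≤ 2)
    (hab : (H ⊔ F)ᶜ.Adj a b) :
    |#(graphsWith d (H ⊔ edge a b) F) - edgeProb d H m a b * #(graphsWith d H F)| ≤
      12 * (L * D) / m * (edgeProb d H m a b * #(graphsWith d H F)) := by
  have hm := h.pos a
  have hsub : #(graphsWith d (H ⊔ edge a b) F) - edgeProb d H m a b * #(graphsWith d H F) =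
      (#(graphsWith d (H ⊔ edge a b) F) * m -
        resDeg d H a * resDeg d H b * #(graphsWith d H F)) / m := by
    rw [edgeProb]
    field_simp
  rw [hsub, abs_div, abs_of_pos hm, div_le_iff₀ hm]
  refine ((le_div_iff₀ hm).2 (h.abs_card_mul_sub_mul_le hk hab)).trans_eq ?_
  rw [edgeProb]
  field_simp

theorem abs_sub_mul_le_of_abs_sub_mul_le {x y z q e e' : ℝ} (he' : 0 ≤ e') (hq : 0 ≤ q)
    (hxz : |x - z| ≤ e * z) (hyx : |y - q * x| ≤ e' * (q * x)) :
    |y - q * z| ≤ (e + e' + e * e') * (q * z) := by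
  have hqxz : q * |x - z| ≤ q * (e * z) := mul_le_mul_of_nonneg_left hxz hq
  have hqx : q * x ≤ (1 + e) * (q * z) := by
    linarith [mul_le_mul_of_nonneg_left (le_abs_self (x - z)) hq]
  calc |y - q * z| = |(y - q * x) + q * (x - z)| := by ring_nf
    _ ≤ |y - q * x| + q * |x - z| := by
      rw [← abs_of_nonneg hq, ← abs_mul, abs_of_nonneg hq]
      exact abs_add_le _ _
    _ ≤ e' * ((1 + e) * (q * z)) + q * (e * z) := by grw [hyx, hqxz, hqx]
    _ = (e + e' + e * e') * (q * z) := by ring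

theorem edgeProb_nonneg (d : V → ℕ) (H : SimpleGraph V) (hm : 0 ≤ m) (a b : V) :
    0 ≤ edgeProb d H m a b := by
  unfold edgeProb
  positivity

theorem SwitchBounds.error_mem_Icc (h : SwitchBounds d H F D L m k) (v : V) :
    12 * (L * D) / m ∈ Set.Icc (0 : ℝ) 1 := by
  have hm := h.pos v
  have := h.large
  have := h.one_le_mul v
  exact ⟨by positivity, (div_le_one hm).2 (by linarith)⟩

theorem SwitchBounds.abs_card_sup_two_edges_sub_le (h : SwitchBounds d H F D L m k) (hk : k ≤ 1)
    (hab : (H ⊔ F)ᶜ.Adj a b) (hxy : (H ⊔ edge a b ⊔ F)ᶜ.Adj x y) :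
    |#(graphsWith d (H ⊔ edge a b ⊔ edge x y) F) -
        edgeProb d (H ⊔ edge a b) m x y * (edgeProb d H m a b * #(graphsWith d H F))| ≤
      3 * (12 * (L * D) / m) *
        (edgeProb d (H ⊔ edge a b) m x y * (edgeProb d H m a b * #(graphsWith d H F))) := by
  obtain ⟨hε0, hε1⟩ := h.error_mem_Icc a
  have hm := (h.pos a).le
  refine (abs_sub_mul_le_of_abs_sub_mul_le hε0 (edgeProb_nonneg _ _ hm x y)
    (h.abs_card_sup_edge_sub_le (by omega) hab)
    ((h.sup_edge a b).abs_card_sup_edge_sub_le (by omega) hxy)).trans ?_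
  have := edgeProb_nonneg d (H ⊔ edge a b) hm x y
  have := edgeProb_nonneg d H hm a b
  gcongr
  nlinarith

theorem SwitchBounds.abs_card_sup_three_edges_sub_le (h : SwitchBounds d H F D L m 0) {z w : V}
    (hab : (H ⊔ F)ᶜ.Adj a b) (hxy : (H ⊔ edge a b ⊔ F)ᶜ.Adj x y)
    (hzw : (H ⊔ edge a b ⊔ edge x y ⊔ F)ᶜ.Adj z w) :
    |#(graphsWith d (H ⊔ edge a b ⊔ edge x y ⊔ edge z w) F) -
        edgeProb d (H ⊔ edge a b ⊔ edge x y) m z w * (edgeProb d (H ⊔ edge a b) m x y *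
          (edgeProb d H m a b * #(graphsWith d H F)))| ≤
      7 * (12 * (L * D) / m) *
        (edgeProb d (H ⊔ edge a b ⊔ edge x y) m z w * (edgeProb d (H ⊔ edge a b) m x y *
          (edgeProb d H m a b * #(graphsWith d H F)))) := by
  obtain ⟨hε0, hε1⟩ := h.error_mem_Icc a
  have hm := (h.pos a).le
  refine (abs_sub_mul_le_of_abs_sub_mul_le hε0 (edgeProb_nonneg _ _ hm z w)
    (h.abs_card_sup_two_edges_sub_le (by omega) hab hxy)
    (((h.sup_edge a b).sup_edge x y).abs_card_sup_edge_sub_le (by omega) hzw)).trans ?_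
  have := edgeProb_nonneg d (H ⊔ edge a b ⊔ edge x y) hm z w
  have := edgeProb_nonneg d (H ⊔ edge a b) hm x y
  have := edgeProb_nonneg d H hm a b
  gcongr
  nlinarith
theorem SwitchBounds.card_not_compl_sup_adj_le (h : SwitchBounds d H F D L m k)
    (hA : (graphsWith d H F).Nonempty) (v : V) : (#{w | ¬ (H ⊔ F)ᶜ.Adj v w} : ℝ) ≤ L := by
  obtain ⟨G, hG⟩ := hA
  refine le_trans (Nat.cast_le.2 (card_le_card ?_)) (h.card_not_compl_adj_le hG v)
  have hHG : H ⊔ F ≤ G ⊔ F := sup_le_sup_right (mem_graphsWith.1 hG).2.1 F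
  exact monotone_filter_right _ fun w _ hw hG ↦ hw (compl_le_compl hHG hG)

theorem SwitchBounds.card_not_compl_adj_and_le (h : SwitchBounds d H F D L m k)
    (hA : (graphsWith d H F).Nonempty) (u v : V) :
    (#{x | ¬ ((H ⊔ F)ᶜ.Adj x u ∧ (H ⊔ F)ᶜ.Adj x v)} : ℝ) ≤ 2 * L := by
  have hsub : ({x | ¬ ((H ⊔ F)ᶜ.Adj x u ∧ (H ⊔ F)ᶜ.Adj x v)} : Finset V) ⊆
      ({x | ¬ (H ⊔ F)ᶜ.Adj u x} : Finset V) ∪ ({x | ¬ (H ⊔ F)ᶜ.Adj v x} : Finset V) := by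
    intro x hx
    simp only [mem_filter_univ, mem_union, not_and_or] at hx ⊢
    rwa [adj_comm _ u x, adj_comm _ v x]
  have := (Nat.cast_le (α := ℝ)).2 ((card_le_card hsub).trans (card_union_le _ _))
  push_cast at this
  linarith [h.card_not_compl_sup_adj_le hA u, h.card_not_compl_sup_adj_le hA v]

theorem filter_two_adj_graphsWith (d : V → ℕ) (hab : (H ⊔ F)ᶜ.Adj a b)
    (hxy : (H ⊔ edge a b ⊔ F)ᶜ.Adj x y) :
    ({G ∈ graphsWith d H F | (G \ H).Adj a b ∧ (G \ H).Adj x y} : Finset _) =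
      graphsWith d (H ⊔ edge a b ⊔ edge x y) F := by
  obtain ⟨hab, hHab⟩ := hab
  obtain ⟨hxy, hHxy⟩ := hxy
  simp only [sup_adj, not_or] at hHab hHxy
  ext G
  simp only [mem_filter, mem_graphsWith_sup_edge, sdiff_adj, hab, hxy, hHab.1, hHxy.1.1,
    false_or, not_false_eq_true, and_true, and_assoc]

theorem abs_sum_sub_sum_le {ι : Type*} [Fintype ι] [DecidableEq ι] (S : Finset ι)
    {f g : ι → ℝ} {e : ℝ}
    (he : 0 ≤ e) (hg : ∀ i, 0 ≤ g i) (hS : ∀ i ∈ S, |f i - g i| ≤ e * g i)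
    (hf : ∀ i ∉ S, f i = 0) : |∑ i, f i - ∑ i, g i| ≤ e * ∑ i, g i + ∑ i ∈ Sᶜ, g i := by
  rw [← sum_sub_distrib]
  calc |∑ i, (f i - g i)| ≤ ∑ i, |f i - g i| := abs_sum_le_sum_abs _ _
    _ = ∑ i ∈ S, |f i - g i| + ∑ i ∈ Sᶜ, |f i - g i| := (sum_add_sum_compl S _).symm
    _ ≤ ∑ i ∈ S, e * g i + ∑ i ∈ Sᶜ, g i := by
      refine add_le_add (sum_le_sum hS) (sum_le_sum fun i hi ↦ ?_)
      rw [hf i (mem_compl.1 hi), zero_sub, abs_neg, abs_of_nonneg (hg i)]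
    _ ≤ e * ∑ i, g i + ∑ i ∈ Sᶜ, g i := by
      rw [← mul_sum]
      grw [sum_le_univ_sum_of_nonneg hg]

/-- The number of ordered pairs of distinct edges at `v` left to be placed once those of `H` are
prescribed; it vanishes when `resDeg d H v = 0`. -/
def resDegPairs (d : V → ℕ) (H : SimpleGraph V) (v : V) : ℕ :=
  resDeg d H v * (resDeg d H v - 1)

theorem SwitchBounds.resDegPairs_le (h : SwitchBounds d H F D L m k) (v : V) :
    (resDegPairs d H v : ℝ) ≤ D * resDeg d H v := by
  rw [resDegPairs, Nat.cast_mul, mul_comm]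
  gcongr
  exact (Nat.cast_le.2 (Nat.sub_le _ _)).trans (h.resDeg_le v)

theorem SwitchBounds.resDegPairs_le_sq (h : SwitchBounds d H F D L m k) (v : V) :
    (resDegPairs d H v : ℝ) ≤ D ^ 2 := by
  rw [sq]
  exact (h.resDegPairs_le v).trans
    (mul_le_mul_of_nonneg_left (h.resDeg_le v) (zero_le_one.trans h.one_le))

theorem SwitchBounds.sum_resDegPairs_le (h : SwitchBounds d H F D L m k) :
    ∑ v, (resDegPairs d H v : ℝ) ≤ D * m := by
  refine (sum_le_sum fun v _ ↦ h.resDegPairs_le v).trans ?_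
  rw [← mul_sum]
  exact mul_le_mul_of_nonneg_left h.sum_le (zero_le_one.trans h.one_le)

variable {u v : V}

theorem edgeProb_sup_edge_mul_edgeProb_of_common (d : V → ℕ) (m : ℝ) (hH : ¬ H.Adj x u)
    (hxu : x ≠ u) (hxv : x ≠ v) (huv : u ≠ v) :
    edgeProb d (H ⊔ edge x u) m x v * edgeProb d H m x u =
      resDeg d H u * resDeg d H v / m ^ 2 * resDegPairs d H x := by
  simp only [edgeProb, resDegPairs, resDeg_sup_edge d hxu hH, hxu, hxv.symm, huv.symm, if_true,
    if_false, add_zero, Nat.sub_zero, Nat.cast_mul]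
  ring

theorem SwitchBounds.abs_card_common_sub_le (h : SwitchBounds d H F D L m 0) (huv : u ≠ v)
    (hxu : (H ⊔ F)ᶜ.Adj x u) (hxv : (H ⊔ F)ᶜ.Adj x v) :
    |(#{G ∈ graphsWith d H F | (G \ H).Adj x u ∧ (G \ H).Adj x v} : ℝ) -
        #(graphsWith d H F) * (resDeg d H u * resDeg d H v / m ^ 2) * resDegPairs d H x| ≤
      36 * (L * D) / m *
        (#(graphsWith d H F) * (resDeg d H u * resDeg d H v / m ^ 2) * resDegPairs d H x) := by
  have hH : ¬ H.Adj x u := fun hH ↦ hxu.2 (.inl hH)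
  have hxv' : (H ⊔ edge x u ⊔ F)ᶜ.Adj x v := by
    have := hxv.1
    simp only [compl_adj, sup_adj, edge_adj] at hxv ⊢
    grind
  have hprob := edgeProb_sup_edge_mul_edgeProb_of_common d m hH hxu.1 hxv.1 huv
  have hcard := h.abs_card_sup_two_edges_sub_le (by norm_num) hxu hxv'
  rw [← mul_assoc, hprob] at hcard
  rw [filter_two_adj_graphsWith d hxu hxv']
  convert hcard using 2 <;> ring_nf

theorem SwitchBounds.abs_sum_card_common_sub_le (h : SwitchBounds d H F D L m 0)
    (hA : (graphsWith d H F).Nonempty) (huv : u ≠ v) :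
    |(∑ G ∈ graphsWith d H F, #{x | (G \ H).Adj x u ∧ (G \ H).Adj x v} : ℝ) -
        #(graphsWith d H F) * (resDeg d H u * resDeg d H v / m ^ 2) *
          ∑ x, (resDegPairs d H x : ℝ)| ≤
      #(graphsWith d H F) * (resDeg d H u * resDeg d H v / m ^ 2) * (38 * (L * D ^ 2)) := by
  set c : ℝ := #(graphsWith d H F) * (resDeg d H u * resDeg d H v / m ^ 2)
  have hm := h.pos u
  have hLD := h.one_le_mul u
  set S : Finset V := {x | (H ⊔ F)ᶜ.Adj x u ∧ (H ⊔ F)ᶜ.Adj x v}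
  have hswap : (∑ G ∈ graphsWith d H F, #{x | (G \ H).Adj x u ∧ (G \ H).Adj x v} : ℝ) =
      ∑ x, (#{G ∈ graphsWith d H F | (G \ H).Adj x u ∧ (G \ H).Adj x v} : ℝ) := by
    exact_mod_cast sum_card_bipartiteAbove_eq_sum_card_bipartiteBelow
      (s := graphsWith d H F) (t := univ) fun G x ↦ (G \ H).Adj x u ∧ (G \ H).Adj x v
  have hoff : ∀ x ∉ S,
      (#{G ∈ graphsWith d H F | (G \ H).Adj x u ∧ (G \ H).Adj x v} : ℝ) = 0 := by
    intro x hx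
    rw [Nat.cast_eq_zero, card_eq_zero, filter_eq_empty_iff]
    intro G hG hadj
    have hle := sdiff_le_compl_of_mem_graphsWith hG
    exact hx (mem_filter.2 ⟨mem_univ x, hle hadj.1, hle hadj.2⟩)
  have hsum := abs_sum_sub_sum_le S (e := 36 * (L * D) / m) (by positivity)
    (fun x ↦ (by positivity : 0 ≤ c * resDegPairs d H x))
    (fun x hx ↦ h.abs_card_common_sub_le huv (mem_filter.1 hx).2.1 (mem_filter.1 hx).2.2) hoff
  rw [hswap, mul_sum]
  refine hsum.trans ?_
  rw [← mul_sum, ← mul_sum]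
  have hSc_sum : ∑ x ∈ Sᶜ, (resDegPairs d H x : ℝ) ≤ 2 * L * D ^ 2 := by
    refine (sum_le_card_nsmul _ _ _ fun x _ ↦ h.resDegPairs_le_sq x).trans ?_
    rw [nsmul_eq_mul, compl_filter]
    grw [h.card_not_compl_adj_and_le hA u v]
  calc 36 * (L * D) / m * (c * ∑ x, (resDegPairs d H x : ℝ)) +
        c * ∑ x ∈ Sᶜ, (resDegPairs d H x : ℝ)
      ≤ 36 * (L * D) / m * (c * (D * m)) + c * (2 * L * D ^ 2) := by
        grw [h.sum_resDegPairs_le, hSc_sum]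
    _ = c * (38 * (L * D ^ 2)) := by
      field_simp
      ring

theorem sum_mul_le_of_card_le (r : V → V → Prop) [DecidableRel r] {f g : V → ℝ} {c : ℝ}
    (hr : ∀ x, (#{y | r x y} : ℝ) ≤ L) (hc : 0 ≤ c) (hf : ∀ x, 0 ≤ f x) (hg : ∀ x, g x ≤ c) :
    ∑ p : V × V with r p.1 p.2, f p.1 * g p.2 ≤ L * c * ∑ x, f x := by
  rw [sum_filter, Fintype.sum_prod_type, mul_sum]
  refine sum_le_sum fun x _ ↦ ?_
  simp only [← sum_filter, mul_comm (f x), ← sum_mul]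
  refine mul_le_mul_of_nonneg_right ?_ (hf x)
  refine (sum_le_card_nsmul _ _ _ fun y _ ↦ hg y).trans ?_
  rw [nsmul_eq_mul]
  exact mul_le_mul_of_nonneg_right (hr x) hc

theorem sum_filter_swap_mul_self (r : V → V → Prop) [DecidableRel r] (f : V → ℝ) :
    ∑ p : V × V with r p.1 p.2, f p.1 * f p.2 = ∑ p : V × V with r p.2 p.1, f p.1 * f p.2 :=
  sum_equiv (Equiv.prodComm V V) (by simp) (by simp [mul_comm])

theorem sum_union_le_sum_add_sum {ι : Type*} [DecidableEq ι] (S T : Finset ι) {f : ι → ℝ}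
    (hf : ∀ i, 0 ≤ f i) : ∑ i ∈ S ∪ T, f i ≤ ∑ i ∈ S, f i + ∑ i ∈ T, f i := by
  rw [← sum_union_inter]
  exact le_add_of_nonneg_right (sum_nonneg fun i _ ↦ hf i)

/-- The ordered pairs `(x, y)` for which `u, x, y, v` is a walk with its end steps in `N` and its
middle step in `J`. With `J = G ⊔ F` and `N = G \ H` these are the pairs counted by `Y1`. -/
def pathPairs (J N : SimpleGraph V) (u v : V) : Finset (V × V) :=
  {p | (N.Adj p.1 u ∧ N.Adj p.2 v) ∧ J.Adj p.1 p.2}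

theorem mem_pathPairs {J N : SimpleGraph V} {p : V × V} :
    p ∈ pathPairs J N u v ↔ (N.Adj p.1 u ∧ N.Adj p.2 v) ∧ J.Adj p.1 p.2 :=
  mem_filter_univ p

theorem resDeg_sup_edge_of_ne (d : V → ℕ) (hab : a ≠ b) (hH : ¬ H.Adj a b) (hxa : x ≠ a)
    (hxb : x ≠ b) : resDeg d (H ⊔ edge a b) x = resDeg d H x := by
  simp [resDeg_sup_edge d hab hH, hxa, hxb]

theorem edgeProb_sup_edge_of_ne (d : V → ℕ) (m : ℝ) (hab : (H ⊔ F)ᶜ.Adj a b) (hxa : x ≠ a)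
    (hxb : x ≠ b) (hya : y ≠ a) (hyb : y ≠ b) :
    edgeProb d (H ⊔ edge a b) m x y = edgeProb d H m x y := by
  have hH : ¬ H.Adj a b := fun hH ↦ hab.2 (.inl hH)
  simp only [edgeProb, resDeg_sup_edge_of_ne d hab.1 hH hxa hxb,
    resDeg_sup_edge_of_ne d hab.1 hH hya hyb]

theorem SwitchBounds.abs_card_path_sub_le_of_adj (h : SwitchBounds d H F D L m 0)
    (huv : F.Adj u v) (hxy : (H ⊔ F).Adj x y) (hxu : (H ⊔ F)ᶜ.Adj x u)
    (hyv : (H ⊔ F)ᶜ.Adj y v) :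
    |(#{G ∈ graphsWith d H F | (x, y) ∈ pathPairs (G ⊔ F) (G \ H) u v} : ℝ) -
        #(graphsWith d H F) * (resDeg d H u * resDeg d H v / m ^ 2) *
          (resDeg d H x * resDeg d H y)| ≤
      36 * (L * D) / m * (#(graphsWith d H F) * (resDeg d H u * resDeg d H v / m ^ 2) *
        (resDeg d H x * resDeg d H y)) := by
  have hyu : y ≠ u := by rintro rfl; exact hyv.2 (.inr huv)
  have hxv : x ≠ v := by rintro rfl; exact hxu.2 (.inr huv.symm)
  have hyv' : (H ⊔ edge x u ⊔ F)ᶜ.Adj y v :=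
    compl_sup_edge_adj hyv (by simp [edge_adj, hxy.ne', hyu])
  have hfilter : ({G ∈ graphsWith d H F | (x, y) ∈ pathPairs (G ⊔ F) (G \ H) u v} : Finset _) =
      graphsWith d (H ⊔ edge x u ⊔ edge y v) F := by
    rw [← filter_two_adj_graphsWith d hxu hyv']
    simp only [mem_pathPairs]
    refine filter_congr fun G hG ↦ and_iff_left ?_
    exact sup_le_sup_right (mem_graphsWith.1 hG).2.1 F hxy
  have hcard := h.abs_card_sup_two_edges_sub_le (by norm_num) hxu hyv'
  rw [edgeProb_sup_edge_of_ne d m hxu hxy.ne' hyu hxv.symm huv.ne', ← hfilter] at hcard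
  simp only [edgeProb] at hcard
  convert hcard using 2 <;> ring_nf

theorem edgeProb_sup_edge_sup_edge (d : V → ℕ) (m : ℝ) (hxy : x ≠ y) (hxu : (H ⊔ F)ᶜ.Adj x u)
    (hyv : (H ⊔ edge x u ⊔ F)ᶜ.Adj y v) (hyu : y ≠ u) (hxv : x ≠ v) :
    edgeProb d (H ⊔ edge x u ⊔ edge y v) m x y =
      ((resDeg d H x - 1 : ℕ) * (resDeg d H y - 1 : ℕ)) / m := by
  have hHxu : ¬ H.Adj x u := fun hH ↦ hxu.2 (.inl hH)
  have hHyv : ¬ (H ⊔ edge x u).Adj y v := fun hH ↦ hyv.2 (.inl hH)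
  simp only [edgeProb, resDeg_sup_edge d hyv.1 hHyv, resDeg_sup_edge d hxu.1 hHxu, hxy, hxy.symm,
    hxu.1, hyv.1, hyu, hxv, if_true, if_false, add_zero, Nat.sub_zero]

theorem SwitchBounds.abs_card_path_sub_le_of_not_adj (h : SwitchBounds d H F D L m 0)
    (huv : F.Adj u v) (hxy : (H ⊔ F)ᶜ.Adj x y) (hxu : (H ⊔ F)ᶜ.Adj x u)
    (hyv : (H ⊔ F)ᶜ.Adj y v) :
    |(#{G ∈ graphsWith d H F | (x, y) ∈ pathPairs (G ⊔ F) (G \ H) u v} : ℝ) -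
        #(graphsWith d H F) * (resDeg d H u * resDeg d H v / m ^ 2) / m *
          (resDegPairs d H x * resDegPairs d H y)| ≤
      84 * (L * D) / m * (#(graphsWith d H F) * (resDeg d H u * resDeg d H v / m ^ 2) / m *
        (resDegPairs d H x * resDegPairs d H y)) := by
  have hyu : y ≠ u := by rintro rfl; exact hyv.2 (.inr huv)
  have hxv : x ≠ v := by rintro rfl; exact hxu.2 (.inr huv.symm)
  have hyv' : (H ⊔ edge x u ⊔ F)ᶜ.Adj y v :=
    compl_sup_edge_adj hyv (by simp [edge_adj, hxy.ne', hyu])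
  have hxy' : (H ⊔ edge x u ⊔ edge y v ⊔ F)ᶜ.Adj x y := by
    refine compl_sup_edge_adj (compl_sup_edge_adj hxy ?_) ?_ <;>
      grind [hxy.ne, huv.ne]
  have hfilter : ({G ∈ graphsWith d H F | (x, y) ∈ pathPairs (G ⊔ F) (G \ H) u v} : Finset _) =
      graphsWith d (H ⊔ edge x u ⊔ edge y v ⊔ edge x y) F := by
    have hF : ¬ F.Adj x y := fun hF ↦ hxy.2 (.inr hF)
    ext G
    rw [mem_graphsWith_sup_edge, ← filter_two_adj_graphsWith d hxu hyv']
    simp only [mem_filter, mem_pathPairs, sup_adj, hF, hxy.ne, or_false, false_or, and_assoc]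
  have hcard := h.abs_card_sup_three_edges_sub_le hxu hyv' hxy'
  rw [edgeProb_sup_edge_sup_edge d m hxy.ne hxu hyv' hyu hxv,
    edgeProb_sup_edge_of_ne d m hxu hxy.ne' hyu hxv.symm huv.ne', ← hfilter] at hcard
  simp only [edgeProb] at hcard
  simp only [resDegPairs, Nat.cast_mul]
  convert hcard using 2 <;> ring_nf

theorem SwitchBounds.abs_sum_card_path_sub_le_of_adj (h : SwitchBounds d H F D L m 0)
    (hA : (graphsWith d H F).Nonempty) (huv : F.Adj u v) :
    |(∑ p ∈ pathPairs (H ⊔ F) (H ⊔ F)ᶜ u v,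
          #{G ∈ graphsWith d H F | p ∈ pathPairs (G ⊔ F) (G \ H) u v} : ℝ) -
        #(graphsWith d H F) * (resDeg d H u * resDeg d H v / m ^ 2) *
          ∑ p ∈ pathPairs (H ⊔ F) (H ⊔ F)ᶜ u v, (resDeg d H p.1 * resDeg d H p.2 : ℝ)| ≤
      #(graphsWith d H F) * (resDeg d H u * resDeg d H v / m ^ 2) * (36 * (L ^ 2 * D ^ 2)) := by
  set c : ℝ := #(graphsWith d H F) * (resDeg d H u * resDeg d H v / m ^ 2)
  have hm := h.pos u
  have hLD := h.one_le_mul u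
  have hD : 0 ≤ D := zero_le_one.trans h.one_le
  have hrow (x : V) : (#{y | (H ⊔ F).Adj x y} : ℝ) ≤ L := by
    refine le_trans (Nat.cast_le.2 (card_le_card ?_)) (h.card_not_compl_sup_adj_le hA x)
    exact monotone_filter_right _ fun y _ hxy hc ↦ hc.2 hxy
  have hmain : ∑ p ∈ pathPairs (H ⊔ F) (H ⊔ F)ᶜ u v, (resDeg d H p.1 * resDeg d H p.2 : ℝ) ≤
      L * D * m := by
    calc ∑ p ∈ pathPairs (H ⊔ F) (H ⊔ F)ᶜ u v, (resDeg d H p.1 * resDeg d H p.2 : ℝ)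
        ≤ ∑ p : V × V with (H ⊔ F).Adj p.1 p.2, (resDeg d H p.1 * resDeg d H p.2 : ℝ) :=
          sum_le_sum_of_subset_of_nonneg
            (fun p hp ↦ mem_filter.2 ⟨mem_univ p, (mem_pathPairs.1 hp).2⟩)
            fun _ _ _ ↦ by positivity
      _ ≤ L * D * ∑ x, (resDeg d H x : ℝ) :=
          sum_mul_le_of_card_le _ hrow hD (fun x ↦ (resDeg d H x).cast_nonneg) h.resDeg_le
      _ ≤ L * D * m := by
          grw [h.sum_le]
  rw [mul_sum, ← sum_sub_distrib]
  calc |∑ p ∈ pathPairs (H ⊔ F) (H ⊔ F)ᶜ u v,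
          ((#{G ∈ graphsWith d H F | p ∈ pathPairs (G ⊔ F) (G \ H) u v} : ℝ) -
            c * (resDeg d H p.1 * resDeg d H p.2))|
      ≤ ∑ p ∈ pathPairs (H ⊔ F) (H ⊔ F)ᶜ u v,
          36 * (L * D) / m * (c * (resDeg d H p.1 * resDeg d H p.2)) := by
        refine (abs_sum_le_sum_abs _ _).trans (sum_le_sum fun p hp ↦ ?_)
        obtain ⟨⟨hpu, hpv⟩, hp⟩ := mem_pathPairs.1 hp
        exact h.abs_card_path_sub_le_of_adj huv hp hpu hpv
    _ ≤ 36 * (L * D) / m * (c * (L * D * m)) := by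
        rw [← mul_sum, ← mul_sum]
        grw [hmain]
    _ = c * (36 * (L ^ 2 * D ^ 2)) := by
        field_simp

theorem SwitchBounds.sum_compl_pathPairs_resDegPairs_le (h : SwitchBounds d H F D L m 0)
    (hA : (graphsWith d H F).Nonempty) (u v : V) :
    ∑ p ∈ (pathPairs (H ⊔ F)ᶜ (H ⊔ F)ᶜ u v)ᶜ, (resDegPairs d H p.1 * resDegPairs d H p.2 : ℝ) ≤
      3 * (L * D ^ 3 * m) := by
  set f : V → ℝ := fun x ↦ resDegPairs d H x
  have hf (x : V) : 0 ≤ f x := by positivity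
  have hnonneg (p : V × V) : 0 ≤ f p.1 * f p.2 := mul_nonneg (hf _) (hf _)
  have hL : 0 ≤ L := zero_le_one.trans (h.one_le.trans (h.degree_bound_le u))
  have hbound (r : V → V → Prop) [DecidableRel r] (hr : ∀ x, (#{y | r x y} : ℝ) ≤ L) :
      ∑ p : V × V with r p.1 p.2, f p.1 * f p.2 ≤ L * D ^ 3 * m := by
    refine (sum_mul_le_of_card_le r hr (sq_nonneg D) hf h.resDegPairs_le_sq).trans ?_
    grw [h.sum_resDegPairs_le]
    exact le_of_eq (by ring)
  have hsub : (pathPairs (H ⊔ F)ᶜ (H ⊔ F)ᶜ u v)ᶜ ⊆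
      ({p | ¬ (H ⊔ F)ᶜ.Adj p.1 p.2} : Finset (V × V)) ∪
        (({p | ¬ (H ⊔ F)ᶜ.Adj u p.1} : Finset (V × V)) ∪
          ({p | ¬ (H ⊔ F)ᶜ.Adj v p.2} : Finset (V × V))) := by
    intro p
    simp only [mem_compl, mem_pathPairs, mem_union, mem_filter_univ, adj_comm _ u, adj_comm _ v]
    tauto
  have hu := hbound (fun _ x ↦ ¬ (H ⊔ F)ᶜ.Adj u x) fun _ ↦ h.card_not_compl_sup_adj_le hA u
  rw [sum_filter_swap_mul_self fun _ x ↦ ¬ (H ⊔ F)ᶜ.Adj u x] at hu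
  have hv := hbound (fun _ y ↦ ¬ (H ⊔ F)ᶜ.Adj v y) fun _ ↦ h.card_not_compl_sup_adj_le hA v
  have hxy := hbound (fun x y ↦ ¬ (H ⊔ F)ᶜ.Adj x y) (h.card_not_compl_sup_adj_le hA)
  refine (sum_le_sum_of_subset_of_nonneg hsub fun p _ _ ↦ hnonneg p).trans ?_
  grw [sum_union_le_sum_add_sum _ _ hnonneg, sum_union_le_sum_add_sum _ _ hnonneg]
  linarith

theorem SwitchBounds.abs_sum_card_path_sub_le_of_not_adj (h : SwitchBounds d H F D L m 0)
    (hA : (graphsWith d H F).Nonempty) (huv : F.Adj u v) :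
    |(∑ p ∈ pathPairs (H ⊔ F)ᶜ (H ⊔ F)ᶜ u v,
          #{G ∈ graphsWith d H F | p ∈ pathPairs (G ⊔ F) (G \ H) u v} : ℝ) -
        #(graphsWith d H F) * (resDeg d H u * resDeg d H v / m ^ 2) *
          ((∑ x, (resDegPairs d H x : ℝ)) ^ 2 / m)| ≤
      #(graphsWith d H F) * (resDeg d H u * resDeg d H v / m ^ 2) * (87 * (L * D ^ 3)) := by
  set c : ℝ := #(graphsWith d H F) * (resDeg d H u * resDeg d H v / m ^ 2)
  have hm := h.pos u
  have hLD := h.one_le_mul u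
  have hprod : ∑ p : V × V, (resDegPairs d H p.1 * resDegPairs d H p.2 : ℝ) =
      (∑ x, (resDegPairs d H x : ℝ)) ^ 2 := by
    rw [sq, sum_mul_sum, Fintype.sum_prod_type]
  have hsum := abs_sum_sub_sum_le (pathPairs (H ⊔ F)ᶜ (H ⊔ F)ᶜ u v)
    (f := fun p ↦ if p ∈ pathPairs (H ⊔ F)ᶜ (H ⊔ F)ᶜ u v then
      (#{G ∈ graphsWith d H F | p ∈ pathPairs (G ⊔ F) (G \ H) u v} : ℝ) else 0)
    (e := 84 * (L * D) / m) (by positivity)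
    (fun p ↦ (by positivity : 0 ≤ c / m * (resDegPairs d H p.1 * resDegPairs d H p.2)))
    (fun p hp ↦ by
      obtain ⟨⟨hpu, hpv⟩, hpp⟩ := mem_pathPairs.1 hp
      rw [if_pos hp]
      exact h.abs_card_path_sub_le_of_not_adj huv hpp hpu hpv)
    (fun p hp ↦ if_neg hp)
  rw [sum_ite_mem, univ_inter, ← mul_sum, ← mul_sum, hprod, ← mul_div_right_comm,
    mul_div_assoc] at hsum
  refine hsum.trans ?_
  grw [h.sum_compl_pathPairs_resDegPairs_le hA u v, h.sum_resDegPairs_le]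
  refine le_of_eq ?_
  field_simp
  ring

theorem pathPairs_subset_union (hG : G ∈ graphsWith d H F) :
    pathPairs (G ⊔ F) (G \ H) u v ⊆
      pathPairs (H ⊔ F) (H ⊔ F)ᶜ u v ∪ pathPairs (H ⊔ F)ᶜ (H ⊔ F)ᶜ u v := by
  intro p hp
  obtain ⟨⟨hpu, hpv⟩, hp⟩ := mem_pathPairs.1 hp
  have hle := sdiff_le_compl_of_mem_graphsWith hG
  simp only [mem_union, mem_pathPairs]
  rw [← and_or_left]
  exact ⟨⟨hle hpu, hle hpv⟩, or_iff_not_imp_left.2 fun hB ↦ ⟨hp.ne, hB⟩⟩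

theorem SwitchBounds.abs_sum_card_path_sub_le (h : SwitchBounds d H F D L m 0)
    (hA : (graphsWith d H F).Nonempty) (huv : F.Adj u v) :
    |(∑ G ∈ graphsWith d H F, #(pathPairs (G ⊔ F) (G \ H) u v) : ℝ) -
        #(graphsWith d H F) * (resDeg d H u * resDeg d H v / m ^ 2) *
          ((∑ x, (resDegPairs d H x : ℝ)) ^ 2 / m +
            ∑ p ∈ pathPairs (H ⊔ F) (H ⊔ F)ᶜ u v, (resDeg d H p.1 * resDeg d H p.2 : ℝ))| ≤
      #(graphsWith d H F) * (resDeg d H u * resDeg d H v / m ^ 2) * (123 * (L ^ 2 * D ^ 2)) := by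
  have hdisj : Disjoint (pathPairs (H ⊔ F) (H ⊔ F)ᶜ u v) (pathPairs (H ⊔ F)ᶜ (H ⊔ F)ᶜ u v) :=
    disjoint_left.2 fun p hp hp' ↦ (mem_pathPairs.1 hp').2.2 (mem_pathPairs.1 hp).2
  have hsplit : (∑ G ∈ graphsWith d H F, #(pathPairs (G ⊔ F) (G \ H) u v) : ℝ) =
      ∑ p ∈ pathPairs (H ⊔ F) (H ⊔ F)ᶜ u v,
          (#{G ∈ graphsWith d H F | p ∈ pathPairs (G ⊔ F) (G \ H) u v} : ℝ) +
        ∑ p ∈ pathPairs (H ⊔ F)ᶜ (H ⊔ F)ᶜ u v,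
          (#{G ∈ graphsWith d H F | p ∈ pathPairs (G ⊔ F) (G \ H) u v} : ℝ) := by
    rw [← sum_union hdisj]
    norm_cast
    refine Eq.trans ?_ (sum_card_bipartiteAbove_eq_sum_card_bipartiteBelow
      fun G p ↦ p ∈ pathPairs (G ⊔ F) (G \ H) u v)
    refine sum_congr rfl fun G hG ↦ ?_
    rw [bipartiteAbove, filter_mem_eq_inter, inter_eq_right.2 (pathPairs_subset_union hG)]
  have hadj := h.abs_sum_card_path_sub_le_of_adj hA huv
  have hnot := h.abs_sum_card_path_sub_le_of_not_adj hA huv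
  set c : ℝ := #(graphsWith d H F) * (resDeg d H u * resDeg d H v / m ^ 2)
  have hLD : c * (L * D ^ 3) ≤ c * (L ^ 2 * D ^ 2) := by
    have hm := h.pos u
    have hLD := h.one_le_mul u
    refine mul_le_mul_of_nonneg_left ?_ (by positivity)
    calc L * D ^ 3 = L * D * D ^ 2 := by ring
      _ ≤ L * D * (L * D) := by grw [h.le_mul u]
      _ = L ^ 2 * D ^ 2 := by ring
  rw [hsplit, mul_add, add_comm, add_comm (c * _), add_comm]
  rw [abs_le] at hadj hnot ⊢
  constructor <;> linarith

end Bounds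

section Expectation

variable {n : ℕ} {d : Fin n → ℕ} {H₁ H₂ G : SimpleGraph (Fin n)} {u v : Fin n}

theorem deg_eq_degree (G : SimpleGraph (Fin n)) (v : Fin n) [Fintype (G.neighborSet v)] :
    deg G v = G.degree v := by
  rw [deg, Set.ncard_eq_toFinset_card', Set.toFinset_card, card_neighborSet_eq_degree]

theorem resDeg_eq_sub_deg (d : Fin n → ℕ) (H₁ : SimpleGraph (Fin n)) (v : Fin n) :
    resDeg d H₁ v = d v - deg H₁ v := by
  rw [resDeg, deg_eq_degree]

theorem deg_sup_edge_le (G : SimpleGraph (Fin n)) (huv : u ≠ v) (i : Fin n) :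
    deg (G ⊔ edge u v) i ≤ deg G i + 1 := by
  rw [deg_eq_degree, deg_eq_degree]
  refine (degree_sup_le _ _ i).trans (Nat.add_le_add_left ?_ _)
  rw [degree_edge huv]
  grind

theorem mem_graphsWith_sup_edge_right :
    G ∈ graphsWith d H₁ (H₂ ⊔ edge u v) ↔
      (∀ i, deg G i = d i) ∧ H₁ ≤ G ∧ ¬ G.Adj u v ∧ Disjoint G.edgeSet H₂.edgeSet := by
  simp only [mem_graphsWith, deg_eq_degree, disjoint_sup_right, disjoint_edgeSet, disjoint_edge]
  tauto

theorem Y1_eq_card_pathPairs (huv : ¬ G.Adj u v) :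
    Y1 H₁ H₂ u v G = #(pathPairs (G ⊔ (H₂ ⊔ edge u v)) (G \ H₁) u v) := by
  refine Nat.subtype_card _ fun p ↦ ?_
  have hvu : ¬ G.Adj v u := fun h ↦ huv h.symm
  simp only [mem_pathPairs, sup_adj, sdiff_adj, edge_adj]
  grind [G.irrefl]

theorem Y2_eq_card (H₁ G : SimpleGraph (Fin n)) (u v : Fin n) :
    Y2 H₁ u v G = #{x | (G \ H₁).Adj x u ∧ (G \ H₁).Adj x v} :=
  Nat.subtype_card _ fun x ↦ by simp only [mem_filter_univ, sdiff_adj, and_assoc]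

theorem coe_pathPairs_sup_edge (H₁ H₂ : SimpleGraph (Fin n)) (huv : u ≠ v) :
    (pathPairs (H₁ ⊔ (H₂ ⊔ edge u v)) (H₁ ⊔ (H₂ ⊔ edge u v))ᶜ u v : Set (Fin n × Fin n)) =
      {p | (H₁ ⊔ H₂).Adj p.1 p.2 ∧ ¬ (H₁ ⊔ H₂).Adj p.1 u ∧ ¬ (H₁ ⊔ H₂).Adj p.2 v ∧
        p.1 ≠ u ∧ p.1 ≠ v ∧ p.2 ≠ u ∧ p.2 ≠ v} := by
  ext p
  simp only [mem_coe, mem_pathPairs, Set.mem_ofPred_eq, sup_adj, compl_adj, edge_adj]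
  grind

theorem expect_eq_sum_div {base : SimpleGraph (Fin n) → Prop}
    {A : Finset (SimpleGraph (Fin n))} (hA : ∀ G, G ∈ A ↔ base G)
    (X : SimpleGraph (Fin n) → ℝ) : expect base X = (∑ G ∈ A, X G) / #A := by
  obtain rfl : (· ∈ A) = base := funext fun G ↦ propext (hA G)
  rw [_root_.expect, Nat.subtype_card A fun _ ↦ Iff.rfl]
  exact congrArg (· / _) (finsum_mem_coe_finset X A)

theorem expect_eq_zero {base : SimpleGraph (Fin n) → Prop} {X : SimpleGraph (Fin n) → ℝ}
    (hX : ∀ G, base G → X G = 0) : expect base X = 0 := by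
  rw [_root_.expect, finsum_mem_eq_zero_of_forall_eq_zero (s := {G | base G}) hX, zero_div]

theorem not_adj_of_deg_eq_zero (hu : deg G u = 0) (x : Fin n) : ¬ G.Adj x u := fun h ↦
  (G.degree_pos_iff_exists_adj u).2 ⟨x, h.symm⟩ |>.ne' (deg_eq_degree G u ▸ hu)

theorem expect_Y1_eq_zero {base : SimpleGraph (Fin n) → Prop} (H₁ H₂ : SimpleGraph (Fin n))
    (v : Fin n) (hu : ∀ G, base G → deg G u = 0) :
    expect base (fun G ↦ (Y1 H₁ H₂ u v G : ℝ)) = 0 :=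
  expect_eq_zero fun G hG ↦ by simp [Y1, not_adj_of_deg_eq_zero (hu G hG)]

theorem expect_Y2_eq_zero {base : SimpleGraph (Fin n) → Prop} (H₁ : SimpleGraph (Fin n))
    (v : Fin n) (hu : ∀ G, base G → deg G u = 0) :
    expect base (fun G ↦ (Y2 H₁ u v G : ℝ)) = 0 :=
  expect_eq_zero fun G hG ↦ by simp [Y2, not_adj_of_deg_eq_zero (hu G hG)]

theorem abs_div_sub_le {S N X e : ℝ} (hN : 0 < N) (h : |S - N * X| ≤ N * e) :
    |S / N - X| ≤ e := by
  rwa [div_sub' hN.ne', abs_div, abs_of_pos hN, div_le_iff₀' hN]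

variable {base : SimpleGraph (Fin n) → Prop} {D L m : ℝ}

theorem SwitchBounds.abs_expect_Y1_sub_le
    (h : SwitchBounds d H₁ (H₂ ⊔ edge u v) D L m 0) (huv : u ≠ v)
    (hbase : ∀ G, G ∈ graphsWith d H₁ (H₂ ⊔ edge u v) ↔ base G) (hne : ∃ G, base G) :
    |expect base (fun G ↦ (Y1 H₁ H₂ u v G : ℝ)) -
        (resDeg d H₁ u * resDeg d H₁ v * (∑ x, resDegPairs d H₁ x : ℕ) ^ 2 / m ^ 3 +
          ∑ p ∈ pathPairs (H₁ ⊔ (H₂ ⊔ edge u v)) (H₁ ⊔ (H₂ ⊔ edge u v))ᶜ u v,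
            resDeg d H₁ p.1 * resDeg d H₁ p.2 * resDeg d H₁ u * resDeg d H₁ v / m ^ 2)| ≤
      resDeg d H₁ u * resDeg d H₁ v / m ^ 2 * (123 * (L ^ 2 * D ^ 2)) := by
  have hA : (graphsWith d H₁ (H₂ ⊔ edge u v)).Nonempty := hne.imp fun G ↦ (hbase G).2
  have hsum := h.abs_sum_card_path_sub_le hA (u := u) (v := v) (by simp [edge_adj, huv])
  rw [expect_eq_sum_div hbase]
  refine abs_div_sub_le (Nat.cast_pos.2 hA.card_pos) ?_
  rw [← Nat.cast_sum univ (resDegPairs d H₁), mul_assoc, mul_assoc] at hsum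
  convert hsum using 4 with G hG
  · rw [Y1_eq_card_pathPairs (mem_graphsWith_sup_edge_right.1 hG).2.2.1]
  · rw [mul_add, mul_sum]
    congr 1
    · ring
    · exact sum_congr rfl fun p _ ↦ by ring

theorem SwitchBounds.abs_expect_Y2_sub_le
    (h : SwitchBounds d H₁ (H₂ ⊔ edge u v) D L m 0) (huv : u ≠ v)
    (hbase : ∀ G, G ∈ graphsWith d H₁ (H₂ ⊔ edge u v) ↔ base G) (hne : ∃ G, base G) :
    |expect base (fun G ↦ (Y2 H₁ u v G : ℝ)) -
        resDeg d H₁ u * resDeg d H₁ v * (∑ x, resDegPairs d H₁ x : ℕ) / m ^ 2| ≤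
      resDeg d H₁ u * resDeg d H₁ v / m ^ 2 * (38 * (L * D ^ 2)) := by
  have hA : (graphsWith d H₁ (H₂ ⊔ edge u v)).Nonempty := hne.imp fun G ↦ (hbase G).2
  have hsum := h.abs_sum_card_common_sub_le hA huv
  rw [expect_eq_sum_div hbase]
  refine abs_div_sub_le (Nat.cast_pos.2 hA.card_pos) ?_
  simp only [Y2_eq_card]
  rw [← Nat.cast_sum univ (resDegPairs d H₁), mul_assoc, mul_assoc] at hsum
  convert hsum using 4
  ring

theorem SwitchBounds.of_maxDeg_le {K Δ : ℝ} (H₁ : SimpleGraph (Fin n)) (hΔ : 1 ≤ Δ)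
    (hd : ∀ i, (d i : ℝ) ≤ Δ) (hH₂ : maxDeg H₂ ≤ K * Δ)
    (hlarge : 20 * (K + 3) * Δ ^ 2 ≤ (∑ i, resDeg d H₁ i : ℕ)) (huv : u ≠ v) :
    SwitchBounds d H₁ (H₂ ⊔ edge u v) Δ ((K + 3) * Δ) (∑ i, resDeg d H₁ i : ℕ) 0 where
  one_le := hΔ
  le := hd
  degree_le i := by
    have hmax : deg H₂ i ≤ maxDeg H₂ := le_sup (mem_univ i)
    have hdeg : (deg (H₂ ⊔ edge u v) i : ℝ) ≤ maxDeg H₂ + 1 := by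
      exact_mod_cast (deg_sup_edge_le H₂ huv i).trans (Nat.add_le_add_right hmax 1)
    rw [← deg_eq_degree]
    linarith
  large := by linarith
  sub_le_sum := by simp
  sum_le := by simp

theorem div_sq_mul_le_of_mul_le {a m M c e : ℝ} (ha : 0 ≤ a) (hc : 0 < c) (hM : 0 < M)
    (hm : c * M ≤ m) (he : 0 ≤ e) : a / m ^ 2 * e ≤ a * e / c ^ 2 / M ^ 2 := by
  have hmM : (c * M) ^ 2 ≤ m ^ 2 := by gcongr
  calc a / m ^ 2 * e ≤ a / (c * M) ^ 2 * e := by gcongr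
    _ = a * e / c ^ 2 / M ^ 2 := by field_simp

theorem path_error_le {x y K c m M Δ : ℝ} (hx : 0 ≤ x) (hy : 0 ≤ y)
    (hc : 0 < c) (hM : 0 < M) (hm : c * M ≤ m) (hMn : M ≤ n * Δ) :
    x * y / m ^ 2 * (123 * (((K + 3) * Δ) ^ 2 * Δ ^ 2)) ≤
      123 * (K + 3) ^ 2 / c ^ 2 * x * y * Δ ^ 5 * n / M ^ 3 := by
  refine (div_sq_mul_le_of_mul_le (mul_nonneg hx hy) hc hM hm (by positivity)).trans ?_
  calc x * y * (123 * (((K + 3) * Δ) ^ 2 * Δ ^ 2)) / c ^ 2 / M ^ 2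
      = 123 * (K + 3) ^ 2 / c ^ 2 * x * y * Δ ^ 4 * M / M ^ 3 := by field_simp
    _ ≤ 123 * (K + 3) ^ 2 / c ^ 2 * x * y * Δ ^ 4 * (n * Δ) / M ^ 3 := by gcongr
    _ = 123 * (K + 3) ^ 2 / c ^ 2 * x * y * Δ ^ 5 * n / M ^ 3 := by ring

theorem common_error_le {x y K c m M Δ : ℝ} (hx : 0 ≤ x) (hy : 0 ≤ y) (hK : 1 ≤ K)
    (hc : 0 < c) (hM : 0 < M) (hm : c * M ≤ m) (hΔ : 0 ≤ Δ) :
    x * y / m ^ 2 * (38 * ((K + 3) * Δ * Δ ^ 2)) ≤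
      123 * (K + 3) ^ 2 / c ^ 2 * x * y * Δ ^ 3 / M ^ 2 := by
  refine (div_sq_mul_le_of_mul_le (mul_nonneg hx hy) hc hM hm (by positivity)).trans ?_
  have hconst : 38 * (K + 3) ≤ 123 * (K + 3) ^ 2 := by nlinarith
  calc x * y * (38 * ((K + 3) * Δ * Δ ^ 2)) / c ^ 2 / M ^ 2
      = 38 * (K + 3) / c ^ 2 * x * y * Δ ^ 3 / M ^ 2 := by field_simp
    _ ≤ 123 * (K + 3) ^ 2 / c ^ 2 * x * y * Δ ^ 3 / M ^ 2 := by gcongr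

end Expectation

end

/-- Estimates on the expected numbers of backward switchings. -/
theorem stmt16 (K c : ℝ) (hK : 1 ≤ K) (hc : 0 < c) :
    ∃ C δ : ℝ, 0 < C ∧ 0 < δ ∧
      ∀ (n : ℕ) (d : Fin n → ℕ) (M Δ : ℕ),
        M = ∑ i, d i → Δ = Finset.univ.sup d →
        Even M → (Δ : ℝ) ^ 2 ≤ δ * M →
        ∀ H₁ H₂ : SimpleGraph (Fin n),
        Disjoint H₁.edgeSet H₂.edgeSet →
        (∀ i, deg H₁ i ≤ d i) →
        (maxDeg H₂ : ℝ) ≤ K * Δ →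
        ∀ dt : Fin n → ℕ, (∀ i, dt i = d i - deg H₁ i) →
        ∀ Mt Mt2 : ℕ, Mt = ∑ i, dt i → Mt2 = ∑ i, dt i * (dt i - 1) →
        c * M ≤ (Mt : ℝ) →
        ∀ u v : Fin n, u ≠ v → ¬ (H₁ ⊔ H₂).Adj u v →
        ∀ W : Set (Fin n × Fin n),
        W = {p : Fin n × Fin n | (H₁ ⊔ H₂).Adj p.1 p.2 ∧ ¬ (H₁ ⊔ H₂).Adj p.1 u ∧
              ¬ (H₁ ⊔ H₂).Adj p.2 v ∧ p.1 ≠ u ∧ p.1 ≠ v ∧ p.2 ≠ u ∧ p.2 ≠ v} →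
        ∀ baseMinus : SimpleGraph (Fin n) → Prop,
        baseMinus = (fun G => (∀ i, deg G i = d i) ∧ H₁ ≤ G ∧ ¬ G.Adj u v ∧
          Disjoint G.edgeSet H₂.edgeSet) →
        (∃ G, baseMinus G) →
        |expect baseMinus (fun G => (Y1 H₁ H₂ u v G : ℝ))
            - ((dt u : ℝ) * (dt v : ℝ) * (Mt2 : ℝ) ^ 2 / (Mt : ℝ) ^ 3
              + ∑ᶠ p ∈ W, (dt p.1 : ℝ) * (dt p.2 : ℝ) * (dt u : ℝ) * (dt v : ℝ) / (Mt : ℝ) ^ 2)|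
          ≤ C * (dt u : ℝ) * (dt v : ℝ) * (Δ : ℝ) ^ 5 * n / (M : ℝ) ^ 3 ∧
        |expect baseMinus (fun G => (Y2 H₁ u v G : ℝ))
            - (dt u : ℝ) * (dt v : ℝ) * (Mt2 : ℝ) / (Mt : ℝ) ^ 2|
          ≤ C * (dt u : ℝ) * (dt v : ℝ) * (Δ : ℝ) ^ 3 / (M : ℝ) ^ 2 := by
  refine ⟨123 * (K + 3) ^ 2 / c ^ 2, c / (20 * (K + 3)), by positivity, by positivity, ?_⟩
  rintro n d M Δ hM hΔ - hδ H₁ H₂ - - hH₂ dt hdt Mt Mt2 rfl rfl hcM u v huv - W rfl base rfl hne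
  have hd (i : Fin n) : d i ≤ Δ := hΔ ▸ Finset.le_sup (Finset.mem_univ i)
  obtain rfl : dt = resDeg d H₁ := funext fun i ↦ (hdt i).trans (resDeg_eq_sub_deg d H₁ i).symm
  obtain rfl | hpos := Δ.eq_zero_or_pos
  · have hd0 (i : Fin n) : d i = 0 := Nat.le_zero.1 (hd i)
    rw [expect_Y1_eq_zero H₁ H₂ v fun G hG ↦ (hG.1 u).trans (hd0 u),
      expect_Y2_eq_zero H₁ v fun G hG ↦ (hG.1 u).trans (hd0 u)]
    simp [resDeg, hd0]
  have hM0 : (0 : ℝ) < M :=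
    pos_of_mul_pos_right (lt_of_lt_of_le (by positivity) hδ) (by positivity)
  have hMn : (M : ℝ) ≤ n * Δ := by
    rw [hM]
    exact_mod_cast (Finset.sum_le_card_nsmul _ d Δ fun i _ ↦ hd i).trans_eq (by simp)
  have hbounds : SwitchBounds d H₁ (H₂ ⊔ SimpleGraph.edge u v) Δ ((K + 3) * Δ)
      (∑ i, resDeg d H₁ i : ℕ) 0 := by
    refine .of_maxDeg_le H₁ (mod_cast hpos) (mod_cast hd) hH₂ ?_ huv
    rw [div_mul_eq_mul_div, le_div_iff₀ (by positivity)] at hδ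
    linarith
  constructor
  · rw [← coe_pathPairs_sup_edge H₁ H₂ huv, finsum_mem_coe_finset]
    exact (hbounds.abs_expect_Y1_sub_le huv (fun _ ↦ mem_graphsWith_sup_edge_right) hne).trans
      (path_error_le (Nat.cast_nonneg _) (Nat.cast_nonneg _) hc hM0 hcM hMn)
  · exact (hbounds.abs_expect_Y2_sub_le huv (fun _ ↦ mem_graphsWith_sup_edge_right) hne).trans
      (common_error_le (Nat.cast_nonneg _) (Nat.cast_nonneg _) hK hc hM0 hcM (Nat.cast_nonneg _))
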